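/- arXiv:1803.07185 — 2 statements merged into one kernel-verified Lean document; each statement's English description precedes it below -/
import Mathlib

section
/- There exists a constant C > 0 such that every tree of size n ≥ 4 with a distinguished root has a straight-line upward planar grid drawing of some width W and height H with W·H ≤ C·n·√(log₂ n)·(log₂ log₂ n)². -/
/-! Put `s ≈ √(log n)` and let `b ≈ log s`, so that `b = O(log log n)`.  A tree with `n ≥ s` vertices is
drawn with height `O(b * n / s)` and width `O(b * s² + log n) = O(b * s²)`, hence with area
`O(b² * s * n)`.

The recursion (`RT.udraw`) works along heavy paths and keeps every root in the top left corner of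
its box.  Let `u` be the first vertex of the heavy path from the root whose heavy child misses more
than `s²` vertices of the tree.

* The branches leaving the path above `u` have total size at most `s²`.  Each of them has a flat
  drawing, of width linear and height logarithmic in its size (`RT.bdraw`).  The path is put on one
  row and these drawings hang below it, which costs `O(b)` additional rows (`RT.Chain.group`).
* The heavy child of `u` is put at the bottom of the column of `u`, and the light children with at
  least `s` descendants are stacked above it, one column to the right (`RT.stage_some`).  The
  additional column is where the summand `log n` of the width comes from, since the size halves at
  a light child.
* The children of `u` with fewer than `s` descendants, of total size `N`, are drawn in the uppermost
  `O(b * (N / s + 1))` rows (`RT.star`).  If `N ≤ s²` their flat drawings fit side by side.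
  Otherwise a box of `s²` columns and `O(N / s)` rows holds so many primitive vectors
  (`card_prim`) that they can be distributed to these children (`exists_dirs`), a child with `a`
  descendants receiving one from the box scaled down by `a`.  Completing a primitive vector `u` to a
  lattice basis `(u, e)` with `u + e` outside the box gives cones that do not meet for different
  vectors (`cone_disj`), and a unimodular shear moves the flat drawing of a child into its cone
  (`RT.cone_draw`), `b` times as long as its vector in order to make room for the height of the
  flat drawing.

In the recurrence for the height, the `O(b)` additional rows of a step are paid for by the more than
`s²` vertices that are missed by the heavy child: either these lie in the first row or in the small
children, and pay `b / s` rows each, or there is another large child, and the slack of the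
induction hypotheses pays.

Planarity is checked by cutting a drawing into *cells*, a vertex with the open edge to its parent,
which have to be pairwise disjoint (`RT.Good`).  Drawings of child subtrees with disjoint regions
combine to a drawing of the parent's subtree (`RT.Fan.union`, `RT.Fan.compose`).
-/

open SimpleGraph

/-- A straight-line planar drawing of a graph `G`: an injective map of vertices to points of
`ℝ²` such that no vertex lies in the interior of (or on) a non-incident edge segment, and any
two distinct edge segments intersect exactly in the images of their common endpoints. -/
def IsStraightLineDrawing {V : Type} (G : SimpleGraph V) (f : V → ℝ × ℝ) : Prop :=
  Function.Injective f ∧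
  (∀ u v w : V, G.Adj u v → w ≠ u → w ≠ v → f w ∉ segment ℝ (f u) (f v)) ∧
  (∀ u v u' v' : V, G.Adj u v → G.Adj u' v' → s(u, v) ≠ s(u', v') →
    segment ℝ (f u) (f v) ∩ segment ℝ (f u') (f v') =
      f '' {w | (w = u ∨ w = v) ∧ (w = u' ∨ w = v')})

/-- A grid drawing of width `W` and height `H`: a straight-line planar drawing with all
vertices on integer grid points of `{1, …, W} × {1, …, H}`. -/
def IsGridDrawing {V : Type} (G : SimpleGraph V) (f : V → ℝ × ℝ) (W H : ℕ) : Prop :=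
  IsStraightLineDrawing G f ∧
  ∀ x : V, ∃ i j : ℤ, 1 ≤ i ∧ i ≤ (W : ℤ) ∧ 1 ≤ j ∧ j ≤ (H : ℤ) ∧ f x = ((i : ℝ), (j : ℝ))

/-- In a tree with distinguished root `r`, `u` is the parent of `v` iff `u` is a neighbor of
`v` lying on the path from `v` to `r` (equivalently, one step closer to the root). -/
def IsParent {V : Type} (G : SimpleGraph V) (r u v : V) : Prop :=
  G.Adj u v ∧ G.dist r u + 1 = G.dist r v

/-- A drawing is upward (w.r.t. root `r`) if every parent is drawn at a `y`-coordinate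
greater than or equal to that of each of its children. -/
def IsUpward {V : Type} (G : SimpleGraph V) (r : V) (f : V → ℝ × ℝ) : Prop :=
  ∀ u v : V, IsParent G r u v → (f v).2 ≤ (f u).2

set_option linter.unusedSectionVars false

/-! ### Rooted trees given by a parent map -/

/-- A finite rooted tree on `V`, encoded by its parent map.  The root is its own parent, and `rk`
is the distance to the root. -/
structure RT (V : Type) where
  par : V → V
  root : V
  rk : V → ℕ
  par_root : par root = root
  rk_par : ∀ v, v ≠ root → rk (par v) + 1 = rk v

namespace RT

open scoped Classical in
/-- The descendants of `v`, including `v`: the vertex set of the subtree hanging at `v`. -/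
noncomputable def D {V : Type} [Fintype V] (T : RT V) (v : V) : Finset V :=
  Finset.univ.filter fun w => ∃ k, T.par^[k] w = v

open scoped Classical in
/-- The children of `v`. -/
noncomputable def ch {V : Type} [Fintype V] (T : RT V) (v : V) : Finset V :=
  Finset.univ.filter fun c => c ≠ T.root ∧ T.par c = v

/-- The size of the subtree at `v`. -/
noncomputable def sz {V : Type} [Fintype V] (T : RT V) (v : V) : ℕ := (T.D v).card

section
variable {V : Type} [Fintype V] {T : RT V}

lemma mem_D {v w : V} : w ∈ T.D v ↔ ∃ k, T.par^[k] w = v := by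
  simp [D]

lemma mem_ch {v c : V} : c ∈ T.ch v ↔ c ≠ T.root ∧ T.par c = v := by
  simp [ch]

lemma self_mem_D (v : V) : v ∈ T.D v := mem_D.2 ⟨0, rfl⟩

lemma rk_iter_le (k : ℕ) (w : V) : T.rk (T.par^[k] w) ≤ T.rk w := by
  induction k with
  | zero => simp
  | succ k ih =>
    rw [Function.iterate_succ_apply']
    refine le_trans ?_ ih
    by_cases h : T.par^[k] w = T.root
    · rw [h, T.par_root]
    · have := T.rk_par _ h
      omega

lemma rk_le_of_mem {v w : V} (h : w ∈ T.D v) : T.rk v ≤ T.rk w := by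
  obtain ⟨k, rfl⟩ := mem_D.1 h
  exact rk_iter_le k w

lemma rk_ch {v c : V} (h : c ∈ T.ch v) : T.rk v + 1 = T.rk c := by
  obtain ⟨h1, rfl⟩ := mem_ch.1 h
  exact T.rk_par c h1

lemma not_mem_D_ch {v c : V} (h : c ∈ T.ch v) : v ∉ T.D c := by
  intro h2
  have := rk_le_of_mem h2
  have := rk_ch h
  omega

lemma iter_root (k : ℕ) : T.par^[k] T.root = T.root := by
  induction k with
  | zero => rfl
  | succ k ih => rw [Function.iterate_succ_apply', ih, T.par_root]

lemma mem_D_iff {v w : V} : w ∈ T.D v ↔ w = v ∨ ∃ c ∈ T.ch v, w ∈ T.D c := by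
  constructor
  · intro h
    obtain ⟨k, hk⟩ := mem_D.1 h
    induction k generalizing v with
    | zero => exact Or.inl hk
    | succ k ih =>
      rw [Function.iterate_succ_apply'] at hk
      by_cases hr : T.par^[k] w = T.root
      · rw [hr, T.par_root] at hk
        subst hk
        exact ih (mem_D.2 ⟨k, hr⟩) hr
      · exact Or.inr ⟨_, mem_ch.2 ⟨hr, hk⟩, mem_D.2 ⟨k, rfl⟩⟩
  · rintro (rfl | ⟨c, hc, hw⟩)
    · exact self_mem_D w
    · obtain ⟨k, hk⟩ := mem_D.1 hw
      refine mem_D.2 ⟨k + 1, ?_⟩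
      rw [Function.iterate_succ_apply', hk, (mem_ch.1 hc).2]

lemma mem_D_of_ch {v c w : V} (hc : c ∈ T.ch v) (hw : w ∈ T.D c) : w ∈ T.D v :=
  mem_D_iff.2 (Or.inr ⟨c, hc, hw⟩)

lemma ch_unique {v c c' w : V} (hc : c ∈ T.ch v) (hc' : c' ∈ T.ch v)
    (hw : w ∈ T.D c) (hw' : w ∈ T.D c') : c = c' := by
  have key : ∀ (d : ℕ) (c c' : V), c ∈ T.ch v → c' ∈ T.ch v → T.par^[d] c = c' → c = c' := by
    intro d c c' hc hc' h
    cases d with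
    | zero => exact h
    | succ d =>
      rw [Function.iterate_succ_apply, (mem_ch.1 hc).2] at h
      have h1 := rk_iter_le (T := T) d v
      rw [h] at h1
      have := rk_ch hc'
      omega
  obtain ⟨k, hk⟩ := mem_D.1 hw
  obtain ⟨k', hk'⟩ := mem_D.1 hw'
  rcases le_total k k' with h | h
  · obtain ⟨d, rfl⟩ := Nat.exists_eq_add_of_le h
    rw [Nat.add_comm, Function.iterate_add_apply, hk] at hk'
    exact key d c c' hc hc' hk'
  · obtain ⟨d, rfl⟩ := Nat.exists_eq_add_of_le h
    rw [Nat.add_comm, Function.iterate_add_apply, hk'] at hk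
    exact (key d c' c hc' hc hk).symm

lemma par_mem_D {c w : V} (hw : w ∈ T.D c) (hne : w ≠ c) : T.par w ∈ T.D c := by
  obtain ⟨k, hk⟩ := mem_D.1 hw
  cases k with
  | zero => exact absurd hk hne
  | succ k => exact mem_D.2 ⟨k, by rw [← hk, Function.iterate_succ_apply]⟩

lemma ne_root_of_mem_D {c w : V} (hw : w ∈ T.D c) (hne : w ≠ c) : w ≠ T.root := by
  rintro rfl
  obtain ⟨k, hk⟩ := mem_D.1 hw
  rw [iter_root] at hk
  exact hne hk

lemma D_root : T.D T.root = Finset.univ := by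
  ext w
  simp only [Finset.mem_univ, iff_true]
  generalize hm : T.rk w = m
  induction m generalizing w with
  | zero =>
    by_cases h : w = T.root
    · rw [h]; exact self_mem_D _
    · have := T.rk_par w h
      omega
  | succ m ih =>
    by_cases h : w = T.root
    · rw [h]; exact self_mem_D _
    · have h1 := T.rk_par w h
      obtain ⟨k, hk⟩ := mem_D.1 (ih (T.par w) (by omega))
      exact mem_D.2 ⟨k + 1, by rw [Function.iterate_succ_apply, hk]⟩

lemma sz_eq (v : V) : T.sz v = 1 + ∑ c ∈ T.ch v, T.sz c := by
  classical
  have h : T.D v = insert v ((T.ch v).biUnion T.D) := by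
    ext w
    simp [mem_D_iff (v := v) (w := w)]
  unfold sz
  rw [h, Finset.card_insert_of_notMem, Finset.card_biUnion, add_comm]
  · intro c hc c' hc' hne
    rw [Function.onFun, Finset.disjoint_left]
    intro w hw hw'
    exact hne (ch_unique hc hc' hw hw')
  · simp only [Finset.mem_biUnion, not_exists, not_and]
    exact fun c hc => not_mem_D_ch hc

lemma sz_pos (v : V) : 0 < T.sz v := Finset.card_pos.2 ⟨v, self_mem_D v⟩

lemma sz_ch_lt {v c : V} (hc : c ∈ T.ch v) : T.sz c < T.sz v := by
  have h := sz_eq (T := T) v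
  have := Finset.single_le_sum (f := T.sz) (fun _ _ => Nat.zero_le _) hc
  omega

/-- A vertex with a child has a heaviest child `h`; its siblings make up the rest of the subtree
and each has less than half of its size. -/
lemma exists_heavy {v : V} (hv : 1 < T.sz v) : ∃ h ∈ T.ch v,
    (∀ c ∈ T.ch v, T.sz c ≤ T.sz h) ∧
    (∀ c ∈ T.ch v, c ≠ h → 2 * T.sz c < T.sz v) := by
  have hne : (T.ch v).Nonempty := by
    by_contra hcon
    rw [Finset.not_nonempty_iff_eq_empty] at hcon
    have := sz_eq (T := T) v
    rw [hcon] at this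
    simp at this
    omega
  obtain ⟨h, hh, hmax⟩ := Finset.exists_max_image (T.ch v) T.sz hne
  refine ⟨h, hh, hmax, fun c hc hch => ?_⟩
  classical
  have h1 := sz_eq (T := T) v
  have h2 : ∑ x ∈ {c, h}, T.sz x ≤ ∑ x ∈ T.ch v, T.sz x := by
    apply Finset.sum_le_sum_of_subset
    intro x hx
    simp only [Finset.mem_insert, Finset.mem_singleton] at hx
    rcases hx with rfl | rfl <;> assumption
  rw [Finset.sum_pair hch] at h2
  have := hmax c hc
  omega

end

end RT

/-! ### Planar drawings of subtrees -/

/-- The open segment between `p` and `q`, in coordinates. -/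
def oe (p q : ℝ × ℝ) : Set (ℝ × ℝ) :=
  {x | ∃ t : ℝ, 0 < t ∧ t < 1 ∧ x.1 = p.1 + t * (q.1 - p.1) ∧ x.2 = p.2 + t * (q.2 - p.2)}

/-- The point lies on the integer grid. -/
def IsInt (p : ℝ × ℝ) : Prop := ∃ i j : ℤ, p = ((i : ℝ), (j : ℝ))

/-- A step that goes weakly down. -/
def RUp (p q : ℝ × ℝ) : Prop := q.2 ≤ p.2

/-- A step that goes weakly down and weakly to the right. -/
def RB (p q : ℝ × ℝ) : Prop := p.1 ≤ q.1 ∧ q.2 ≤ p.2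

namespace RT

open scoped Classical in
/-- The part of a drawing of the subtree at `v` which belongs to the vertex `w`: the point of `w`
together with the edge from `w` to its parent, without the parent.  The edge above the root `v` of
the subtree is left out.  A drawing is planar iff the cells of distinct vertices are disjoint. -/
noncomputable def cell {V : Type} (T : RT V) (f : V → ℝ × ℝ) (v w : V) : Set (ℝ × ℝ) :=
  if w = v then {f v} else insert (f w) (oe (f (T.par w)) (f w))

/-- All points covered by the drawing `f` of the subtree at `v`. -/
def piece {V : Type} [Fintype V] (T : RT V) (f : V → ℝ × ℝ) (v : V) : Set (ℝ × ℝ) :=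
  {x | ∃ w ∈ T.D v, x ∈ T.cell f v w}

/-- `f` is a planar grid drawing of the subtree at `v` in which the step from every parent to its
child satisfies `R`. -/
structure Good {V : Type} [Fintype V] (T : RT V) (R : ℝ × ℝ → ℝ × ℝ → Prop)
    (f : V → ℝ × ℝ) (v : V) : Prop where
  int : ∀ w ∈ T.D v, IsInt (f w)
  mono : ∀ w ∈ T.D v, w ≠ v → R (f (T.par w)) (f w)
  disj : ∀ w ∈ T.D v, ∀ w' ∈ T.D v, w ≠ w' → ∀ x ∈ T.cell f v w, x ∉ T.cell f v w'

/-- The drawing `g c` of the subtree at `c`, together with the edge from its root to an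
apex `p`. -/
def stuff {V : Type} [Fintype V] (T : RT V) (p : ℝ × ℝ) (g : V → V → ℝ × ℝ) (c : V) :
    Set (ℝ × ℝ) :=
  oe p (g c c) ∪ T.piece (g c) c

/-- The subtrees at the vertices of `C` can be drawn inside the region `A`, together with straight
edges from a common apex `p` to all their roots, without crossings. -/
def Fan {V : Type} [Fintype V] (T : RT V) (R : ℝ × ℝ → ℝ × ℝ → Prop) (p : ℝ × ℝ)
    (C : Finset V) (A : Set (ℝ × ℝ)) : Prop :=
  ∃ g : V → V → ℝ × ℝ,
    (∀ c ∈ C, T.Good R (g c) c) ∧ (∀ c ∈ C, R p (g c c)) ∧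
    (∀ c ∈ C, ∀ x ∈ oe p (g c c), x ∉ T.piece (g c) c) ∧
    (∀ c ∈ C, ∀ c' ∈ C, c ≠ c' → ∀ x ∈ T.stuff p g c, x ∉ T.stuff p g c') ∧
    ∀ c ∈ C, T.stuff p g c ⊆ A

section
variable {V : Type} [Fintype V] {T : RT V} {R : ℝ × ℝ → ℝ × ℝ → Prop}

lemma root_mem_piece (f : V → ℝ × ℝ) (v : V) : f v ∈ T.piece f v :=
  ⟨v, self_mem_D v, by simp [cell]⟩

lemma Good.weaken {R' : ℝ × ℝ → ℝ × ℝ → Prop} (hR : ∀ p q, R p q → R' p q) {f : V → ℝ × ℝ}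
    {v : V} (h : T.Good R f v) : T.Good R' f v :=
  ⟨h.int, fun w hw hne => hR _ _ (h.mono w hw hne), h.disj⟩

lemma Fan.weaken {R' : ℝ × ℝ → ℝ × ℝ → Prop} (hR : ∀ p q, R p q → R' p q) {p : ℝ × ℝ}
    {C : Finset V} {A : Set (ℝ × ℝ)} (h : T.Fan R p C A) : T.Fan R' p C A := by
  obtain ⟨g, h1, h2, h3⟩ := h
  exact ⟨g, fun c hc => (h1 c hc).weaken hR, fun c hc => hR _ _ (h2 c hc), h3⟩

lemma Fan.subset {p : ℝ × ℝ} {C : Finset V} {A A' : Set (ℝ × ℝ)} (h : T.Fan R p C A)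
    (hA : A ⊆ A') : T.Fan R p C A' := by
  obtain ⟨g, h1, h2, h3, h4, h5⟩ := h
  exact ⟨g, h1, h2, h3, h4, fun c hc => (h5 c hc).trans hA⟩

lemma fan_empty (p : ℝ × ℝ) (A : Set (ℝ × ℝ)) : T.Fan R p ∅ A :=
  ⟨fun _ _ => 0, by simp, by simp, by simp, by simp, by simp⟩

lemma fan_single {p : ℝ × ℝ} {c : V} {f : V → ℝ × ℝ} {A : Set (ℝ × ℝ)} (hf : T.Good R f c)
    (hR : R p (f c)) (h : ∀ x ∈ oe p (f c), x ∉ T.piece f c)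
    (hA : oe p (f c) ⊆ A) (hA' : T.piece f c ⊆ A) : T.Fan R p {c} A := by
  refine ⟨fun _ => f, ?_, ?_, ?_, ?_, ?_⟩
  · simpa using hf
  · simpa using hR
  · simpa using h
  · intro a ha b hb hab
    simp only [Finset.mem_singleton] at ha hb
    exact absurd (ha.trans hb.symm) hab
  · intro a ha
    rw [Finset.mem_singleton] at ha
    subst ha
    exact Set.union_subset hA hA'

open scoped Classical in
lemma Fan.union {p : ℝ × ℝ} {C C' : Finset V} {A A' : Set (ℝ × ℝ)} (h : T.Fan R p C A)
    (h' : T.Fan R p C' A') (hd : ∀ x ∈ A, x ∉ A') : T.Fan R p (C ∪ C') (A ∪ A') := by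
  obtain ⟨g, h1, h2, h3, h4, h5⟩ := h
  obtain ⟨g', h1', h2', h3', h4', h5'⟩ := h'
  set G : V → V → ℝ × ℝ := fun c => if c ∈ C then g c else g' c with hG
  have e1 : ∀ c ∈ C, G c = g c := fun c hc => by simp [hG, hc]
  have e2 : ∀ c, c ∉ C → G c = g' c := fun c hc => by simp [hG, hc]
  have s1 : ∀ c ∈ C, T.stuff p G c = T.stuff p g c := fun c hc => by simp [stuff, e1 c hc]
  have s2 : ∀ c, c ∉ C → T.stuff p G c = T.stuff p g' c := fun c hc => by simp [stuff, e2 c hc]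
  refine ⟨G, ?_, ?_, ?_, ?_, ?_⟩
  · intro c hc
    by_cases hcC : c ∈ C
    · rw [e1 c hcC]; exact h1 c hcC
    · rw [e2 c hcC]; exact h1' c ((Finset.mem_union.1 hc).resolve_left hcC)
  · intro c hc
    by_cases hcC : c ∈ C
    · rw [e1 c hcC]; exact h2 c hcC
    · rw [e2 c hcC]; exact h2' c ((Finset.mem_union.1 hc).resolve_left hcC)
  · intro c hc
    by_cases hcC : c ∈ C
    · rw [e1 c hcC]; exact h3 c hcC
    · rw [e2 c hcC]; exact h3' c ((Finset.mem_union.1 hc).resolve_left hcC)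
  · intro c hc c' hc' hne x hx
    by_cases hcC : c ∈ C <;> by_cases hcC' : c' ∈ C
    · rw [s1 c hcC] at hx
      rw [s1 c' hcC']
      exact h4 c hcC c' hcC' hne x hx
    · rw [s1 c hcC] at hx
      rw [s2 c' hcC']
      have hm := (Finset.mem_union.1 hc').resolve_left hcC'
      exact fun hx' => hd x (h5 c hcC hx) (h5' c' hm hx')
    · rw [s2 c hcC] at hx
      rw [s1 c' hcC']
      have hm := (Finset.mem_union.1 hc).resolve_left hcC
      exact fun hx' => hd x (h5 c' hcC' hx') (h5' c hm hx)
    · rw [s2 c hcC] at hx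
      rw [s2 c' hcC']
      exact h4' c ((Finset.mem_union.1 hc).resolve_left hcC) c'
        ((Finset.mem_union.1 hc').resolve_left hcC') hne x hx
  · intro c hc
    by_cases hcC : c ∈ C
    · rw [s1 c hcC]; exact (h5 c hcC).trans Set.subset_union_left
    · rw [s2 c hcC]
      exact (h5' c ((Finset.mem_union.1 hc).resolve_left hcC)).trans Set.subset_union_right

/-- A fan over all children of `v` is a drawing of the subtree at `v` with `v` at the apex. -/
lemma Fan.compose {p : ℝ × ℝ} {v : V} {A : Set (ℝ × ℝ)} (h : T.Fan R p (T.ch v) A)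
    (hp : IsInt p) (hpA : p ∉ A) :
    ∃ f, T.Good R f v ∧ f v = p ∧ T.piece f v ⊆ insert p A := by
  classical
  obtain ⟨g, h1, h2, h3, h4, h5⟩ := h
  let f : V → ℝ × ℝ := fun w =>
    if hw : ∃ c ∈ T.ch v, w ∈ T.D c then g hw.choose w else p
  have fv : f v = p := by
    have : ¬ ∃ c ∈ T.ch v, v ∈ T.D c := by
      rintro ⟨c, hc, hv⟩
      exact not_mem_D_ch hc hv
    simp only [f, dif_neg this]
  have fc : ∀ c ∈ T.ch v, ∀ w ∈ T.D c, f w = g c w := by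
    intro c hc w hw
    have hex : ∃ c ∈ T.ch v, w ∈ T.D c := ⟨c, hc, hw⟩
    have := ch_unique hex.choose_spec.1 hc hex.choose_spec.2 hw
    simp only [f, dif_pos hex]
    rw [this]
  have cv : T.cell f v v = {p} := by simp [cell, fv]
  -- the cell of the root of a child subtree gains the edge to `v`; all other cells are unchanged
  have cc : ∀ c ∈ T.ch v, T.cell f v c = oe p (g c c) ∪ T.cell (g c) c c := by
    intro c hc
    have hne : c ≠ v := fun e => not_mem_D_ch hc (e ▸ self_mem_D c)
    rw [cell, if_neg hne, (mem_ch.1 hc).2, fv, fc c hc c (self_mem_D c), cell, if_pos rfl,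
      Set.union_singleton]
  have cw : ∀ c ∈ T.ch v, ∀ w ∈ T.D c, w ≠ c → T.cell f v w = T.cell (g c) c w := by
    intro c hc w hw hne
    have hnv : w ≠ v := fun e => not_mem_D_ch hc (e ▸ hw)
    rw [cell, if_neg hnv, cell, if_neg hne, fc c hc w hw, fc c hc _ (par_mem_D hw hne)]
  have cs : ∀ c ∈ T.ch v, ∀ w ∈ T.D c, T.cell f v w ⊆ T.stuff p g c := by
    intro c hc w hw x hx
    by_cases hwc : w = c
    · subst hwc
      rw [cc w hc] at hx
      exact hx.imp id fun hx => ⟨w, hw, hx⟩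
    · rw [cw c hc w hw hwc] at hx
      exact Or.inr ⟨w, hw, hx⟩
  refine ⟨f, ⟨?_, ?_, ?_⟩, fv, ?_⟩
  · intro w hw
    rcases mem_D_iff.1 hw with rfl | ⟨c, hc, hwc⟩
    · rw [fv]; exact hp
    · rw [fc c hc w hwc]; exact (h1 c hc).int w hwc
  · intro w hw hne
    rcases mem_D_iff.1 hw with rfl | ⟨c, hc, hwc⟩
    · exact absurd rfl hne
    · by_cases e : w = c
      · subst e
        rw [(mem_ch.1 hc).2, fv, fc w hc w hwc]
        exact h2 w hc
      · rw [fc c hc w hwc, fc c hc _ (par_mem_D hwc e)]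
        exact (h1 c hc).mono w hwc e
  · intro w hw w' hw' hne x hx hx'
    rcases mem_D_iff.1 hw with rfl | ⟨c, hc, hwc⟩
    · rcases mem_D_iff.1 hw' with rfl | ⟨c', hc', hwc'⟩
      · exact hne rfl
      · rw [cv, Set.mem_singleton_iff] at hx
        subst hx
        exact hpA (h5 c' hc' (cs c' hc' w' hwc' hx'))
    · rcases mem_D_iff.1 hw' with rfl | ⟨c', hc', hwc'⟩
      · rw [cv, Set.mem_singleton_iff] at hx'
        subst hx'
        exact hpA (h5 c hc (cs c hc w hwc hx))
      · by_cases e : c = c'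
        · subst e
          by_cases e1 : w = c
          · subst e1
            rw [cc w hc] at hx
            rw [cw w hc w' hwc' hne.symm] at hx'
            rcases hx with hx | hx
            · exact h3 w hc x hx ⟨w', hwc', hx'⟩
            · exact (h1 w hc).disj w hwc w' hwc' hne x hx hx'
          · rw [cw c hc w hwc e1] at hx
            by_cases e2 : w' = c
            · subst e2
              rw [cc w' hc] at hx'
              rcases hx' with hx' | hx'
              · exact h3 w' hc x hx' ⟨w, hwc, hx⟩
              · exact (h1 w' hc).disj w hwc w' hwc' hne x hx hx'
            · rw [cw c hc w' hwc' e2] at hx'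
              exact (h1 c hc).disj w hwc w' hwc' hne x hx hx'
        · exact h4 c hc c' hc' e x (cs c hc w hwc hx) (cs c' hc' w' hwc' hx')
  · rintro x ⟨w, hw, hx⟩
    rcases mem_D_iff.1 hw with rfl | ⟨c, hc, hwc⟩
    · rw [cv] at hx
      exact Or.inl hx
    · exact Or.inr (h5 c hc (cs c hc w hwc hx))

/-- The affine map with linear part `(k, y) ↦ k • (α₁, α₂) + y • (β₁, β₂)`. -/
def aff (o₁ o₂ α₁ α₂ β₁ β₂ : ℝ) (p : ℝ × ℝ) : ℝ × ℝ :=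
  (o₁ + p.1 * α₁ + p.2 * β₁, o₂ + p.1 * α₂ + p.2 * β₂)

lemma oe_aff {o₁ o₂ α₁ α₂ β₁ β₂ : ℝ} {p q x : ℝ × ℝ}
    (hx : x ∈ oe (aff o₁ o₂ α₁ α₂ β₁ β₂ p) (aff o₁ o₂ α₁ α₂ β₁ β₂ q)) :
    ∃ y ∈ oe p q, x = aff o₁ o₂ α₁ α₂ β₁ β₂ y := by
  obtain ⟨t, h0, h1, e1, e2⟩ := hx
  refine ⟨(p.1 + t * (q.1 - p.1), p.2 + t * (q.2 - p.2)), ⟨t, h0, h1, rfl, rfl⟩, ?_⟩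
  ext
  · rw [e1]; simp only [aff]; ring
  · rw [e2]; simp only [aff]; ring

lemma aff_inj {o₁ o₂ α₁ α₂ β₁ β₂ : ℝ} (hdet : α₁ * β₂ - α₂ * β₁ ≠ 0) {p q : ℝ × ℝ}
    (h : aff o₁ o₂ α₁ α₂ β₁ β₂ p = aff o₁ o₂ α₁ α₂ β₁ β₂ q) : p = q := by
  simp only [aff, Prod.mk.injEq] at h
  obtain ⟨h1, h2⟩ := h
  ext
  · have : (p.1 - q.1) * (α₁ * β₂ - α₂ * β₁) = 0 := by linear_combination β₂ * h1 - β₁ * h2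
    rcases mul_eq_zero.1 this with h | h
    · linarith
    · exact absurd h hdet
  · have : (p.2 - q.2) * (α₁ * β₂ - α₂ * β₁) = 0 := by linear_combination α₁ * h2 - α₂ * h1
    rcases mul_eq_zero.1 this with h | h
    · linarith
    · exact absurd h hdet

/-- A nonsingular integer affine map turns grid drawings into grid drawings. -/
lemma Good.aff {R' : ℝ × ℝ → ℝ × ℝ → Prop} {f : V → ℝ × ℝ} {v : V} (h : T.Good R f v)
    (o₁ o₂ α₁ α₂ β₁ β₂ : ℤ) (hdet : α₁ * β₂ - α₂ * β₁ ≠ 0)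
    (hR : ∀ p q, R p q → R' (RT.aff o₁ o₂ α₁ α₂ β₁ β₂ p) (RT.aff o₁ o₂ α₁ α₂ β₁ β₂ q)) :
    T.Good R' (fun w => RT.aff o₁ o₂ α₁ α₂ β₁ β₂ (f w)) v ∧
    ∀ x ∈ T.piece (fun w => RT.aff o₁ o₂ α₁ α₂ β₁ β₂ (f w)) v,
      ∃ y ∈ T.piece f v, x = RT.aff o₁ o₂ α₁ α₂ β₁ β₂ y := by
  have hdet' : (α₁ : ℝ) * β₂ - α₂ * β₁ ≠ 0 := by exact_mod_cast hdet
  have hc : ∀ w, ∀ x ∈ T.cell (fun w => RT.aff o₁ o₂ α₁ α₂ β₁ β₂ (f w)) v w,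
      ∃ y ∈ T.cell f v w, x = RT.aff o₁ o₂ α₁ α₂ β₁ β₂ y := by
    intro w x hx
    unfold cell at hx ⊢
    by_cases hw : w = v
    · rw [if_pos hw] at hx ⊢
      exact ⟨f v, rfl, hx⟩
    · rw [if_neg hw] at hx ⊢
      rcases hx with hx | hx
      · exact ⟨f w, Or.inl rfl, hx⟩
      · obtain ⟨y, hy, e⟩ := oe_aff hx
        exact ⟨y, Or.inr hy, e⟩
  refine ⟨⟨?_, fun w hw hne => hR _ _ (h.mono w hw hne), ?_⟩, ?_⟩
  · intro w hw
    obtain ⟨i, j, e⟩ := h.int w hw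
    refine ⟨o₁ + i * α₁ + j * β₁, o₂ + i * α₂ + j * β₂, ?_⟩
    simp only [RT.aff, e]
    push_cast
    rfl
  · intro w hw w' hw' hne x hx hx'
    obtain ⟨y, hy, e⟩ := hc w x hx
    obtain ⟨y', hy', e'⟩ := hc w' x hx'
    have : y = y' := aff_inj hdet' (e.symm.trans e')
    subst this
    exact h.disj w hw w' hw' hne y hy hy'
  · rintro x ⟨w, hw, hx⟩
    obtain ⟨y, hy, e⟩ := hc w x hx
    exact ⟨y, ⟨w, hw, hy⟩, e⟩

/-- Translates of drawings. -/
lemma Good.shift {f : V → ℝ × ℝ} {v : V} (h : T.Good R f v)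
    (hRt : ∀ a b p q, R p q → R (p + (a, b)) (q + (a, b))) (a b : ℤ) :
    ∃ f', T.Good R f' v ∧ f' v = f v + ((a : ℝ), (b : ℝ)) ∧
      ∀ x ∈ T.piece f' v, ∃ y ∈ T.piece f v, x.1 = y.1 + a ∧ x.2 = y.2 + b := by
  have e : ∀ p : ℝ × ℝ, RT.aff (a : ℝ) b (1 : ℤ) (0 : ℤ) (0 : ℤ) (1 : ℤ) p
      = p + ((a : ℝ), (b : ℝ)) := by
    intro p
    ext <;> simp [RT.aff] <;> ring
  obtain ⟨h1, h2⟩ := h.aff (R' := R) a b 1 0 0 1 (by norm_num) (by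
    intro p q hpq
    rw [e, e]
    exact hRt _ _ _ _ hpq)
  refine ⟨_, h1, e _, fun x hx => ?_⟩
  obtain ⟨y, hy, rfl⟩ := h2 x hx
  rw [e]
  exact ⟨y, hy, rfl, rfl⟩

end

end RT

lemma RUp_shift (a b : ℝ) (p q : ℝ × ℝ) (h : RUp p q) : RUp (p + (a, b)) (q + (a, b)) := by
  simpa [RUp] using h

lemma RB_shift (a b : ℝ) (p q : ℝ × ℝ) (h : RB p q) : RB (p + (a, b)) (q + (a, b)) := by
  simpa [RB] using h

lemma RB_RUp (p q : ℝ × ℝ) (h : RB p q) : RUp p q := h.2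

/-! ### Flat drawings: width `n`, height `log n` -/

/-- The region used by drawings placed side by side in the columns from `x₀` to `x₁`, with roots on
the row below the apex `p`, together with the edges from `p` to their roots. -/
def rowReg (p : ℝ × ℝ) (x₀ x₁ H : ℝ) : Set (ℝ × ℝ) :=
  {q | q.2 < p.2 ∧ p.2 - 1 - H ≤ q.2 ∧ (q.2 ≤ p.2 - 1 → x₀ ≤ q.1 ∧ q.1 ≤ x₁) ∧
    (p.2 - 1 < q.2 →
      (x₀ - p.1) * (p.2 - q.2) ≤ q.1 - p.1 ∧ q.1 - p.1 ≤ (x₁ - p.1) * (p.2 - q.2))}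

lemma rowReg_mono {p : ℝ × ℝ} {x₀ x₁ x₀' x₁' H : ℝ} (h₀ : x₀' ≤ x₀) (h₁ : x₁ ≤ x₁') :
    rowReg p x₀ x₁ H ⊆ rowReg p x₀' x₁' H := by
  rintro q ⟨a, b, c, d⟩
  refine ⟨a, b, fun h => ⟨h₀.trans (c h).1, (c h).2.trans h₁⟩, fun h => ⟨?_, ?_⟩⟩
  · refine le_trans ?_ (d h).1
    apply mul_le_mul_of_nonneg_right <;> linarith
  · refine (d h).2.trans ?_
    apply mul_le_mul_of_nonneg_right <;> linarith

lemma rowReg_disj {p : ℝ × ℝ} {x₀ x₁ x₀' x₁' H : ℝ} (h : x₁ < x₀') :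
    ∀ q ∈ rowReg p x₀ x₁ H, q ∉ rowReg p x₀' x₁' H := by
  rintro q ⟨a, b, c, d⟩ ⟨a', b', c', d'⟩
  rcases le_or_gt q.2 (p.2 - 1) with hq | hq
  · linarith [(c hq).2, (c' hq).1]
  · have h1 := (d hq).2
    have h2 := (d' hq).1
    have : (x₁ - p.1) * (p.2 - q.2) < (x₀' - p.1) * (p.2 - q.2) := by
      apply mul_lt_mul_of_pos_right <;> linarith
    linarith

/-- In `rowReg`, a bound for the horizontal extent that includes the edges. -/
lemma rowReg_bounds {p q : ℝ × ℝ} {x₀ x₁ H : ℝ} (hp : p.1 ≤ x₀) (h01 : x₀ ≤ x₁ ∨ p.1 ≤ x₁)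
    (h : q ∈ rowReg p x₀ x₁ H) :
    p.1 ≤ q.1 ∧ q.1 ≤ x₁ ∧ (p.1 < x₀ → p.1 < q.1) := by
  obtain ⟨a, b, c, d⟩ := h
  have h1 : p.1 ≤ x₁ := by rcases h01 with h | h <;> linarith
  rcases le_or_gt q.2 (p.2 - 1) with hq | hq
  · obtain ⟨c1, c2⟩ := c hq
    exact ⟨by linarith, c2, fun _ => by linarith⟩
  · obtain ⟨d1, d2⟩ := d hq
    refine ⟨by nlinarith, by nlinarith, fun h => ?_⟩
    have := mul_pos (sub_pos.2 h) (sub_pos.2 a)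
    linarith

namespace RT

/-- The subtree at `c` has a drawing with its root in the top left corner of a box of `|D c|`
columns and `H + 1` rows, in which all edges go weakly down and weakly to the right. -/
def BDraw {V : Type} [Fintype V] (T : RT V) (c : V) (H : ℕ) : Prop :=
  ∃ f, T.Good RB f c ∧ f c = (0, 0) ∧
    ∀ x ∈ T.piece f c, 0 ≤ x.1 ∧ x.1 ≤ T.sz c - 1 ∧ -(H : ℝ) ≤ x.2 ∧ x.2 ≤ 0

section
variable {V : Type} [Fintype V] {T : RT V}

lemma BDraw.mono {c : V} {H H' : ℕ} (h : T.BDraw c H) (hH : H ≤ H') : T.BDraw c H' := by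
  obtain ⟨f, h1, h2, h3⟩ := h
  refine ⟨f, h1, h2, fun x hx => ?_⟩
  obtain ⟨a, b, c, d⟩ := h3 x hx
  have : (H : ℝ) ≤ H' := by exact_mod_cast hH
  exact ⟨a, b, by linarith, d⟩

/-- Flat drawings placed side by side below a common apex. -/
lemma row {H : ℕ} (i j : ℤ) (x₀ : ℤ) (hx₀ : i ≤ x₀) (C : Finset V)
    (hC : ∀ c ∈ C, T.BDraw c H) :
    T.Fan RB ((i : ℝ), (j : ℝ)) C
      (rowReg ((i : ℝ), (j : ℝ)) x₀ (x₀ + ((∑ c ∈ C, T.sz c : ℕ) : ℝ) - 1) H) := by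
  classical
  induction C using Finset.induction_on with
  | empty => exact fan_empty _ _
  | insert c C hc ih =>
    have ih' := ih fun c' hc' => hC c' (Finset.mem_insert_of_mem hc')
    rw [Finset.sum_insert hc]
    set N := ∑ c ∈ C, T.sz c with hN
    obtain ⟨f, hf, hf0, hfp⟩ := hC c (Finset.mem_insert_self _ _)
    obtain ⟨f', hf', hf0', hfp'⟩ := hf.shift RB_shift (x₀ + N) (j - 1)
    rw [hf0] at hf0'
    have hi : (i : ℝ) ≤ x₀ := by exact_mod_cast hx₀
    have hNr : (0 : ℝ) ≤ N := by positivity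
    have hroot : f' c = ((x₀ : ℝ) + N, (j : ℝ) - 1) := by
      rw [hf0']; push_cast; simp
    have hpc : ∀ x ∈ T.piece f' c, (x₀ : ℝ) + N ≤ x.1 ∧ x.1 ≤ x₀ + N + T.sz c - 1 ∧
        (j : ℝ) - 1 - H ≤ x.2 ∧ x.2 ≤ j - 1 := by
      intro x hx
      obtain ⟨y, hy, e1, e2⟩ := hfp' x hx
      obtain ⟨a1, a2, a3, a4⟩ := hfp y hy
      push_cast at e1 e2
      rw [e1, e2]
      refine ⟨?_, ?_, ?_, ?_⟩ <;> linarith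
    have hszc : (1 : ℝ) ≤ T.sz c := by exact_mod_cast sz_pos (T := T) c
    have hs : T.Fan RB ((i : ℝ), (j : ℝ)) {c}
        (rowReg ((i : ℝ), (j : ℝ)) (x₀ + N) (x₀ + N + T.sz c - 1) H) := by
      apply fan_single hf'
      · rw [hroot]
        exact ⟨by simp; linarith, by simp⟩
      · rintro x ⟨t, h0, h1, e1, e2⟩ hx
        rw [hroot] at e2
        have := (hpc x hx).2.2.2
        simp only at e2
        nlinarith
      · rintro x ⟨t, h0, h1, e1, e2⟩
        rw [hroot] at e1 e2
        simp only at e1 e2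
        have hH : (0 : ℝ) ≤ H := by positivity
        have e3 : x.2 = j - t := by rw [e2]; ring
        have e4 : x.1 = i + t * (x₀ + N - i) := e1
        refine ⟨?_, ?_, ?_, ?_⟩
        · simp only; linarith
        · simp only; linarith
        · simp only; intro h; linarith
        · simp only
          intro h
          rw [e3, e4]
          constructor
          · apply le_of_eq; ring
          · nlinarith
      · intro x hx
        obtain ⟨a1, a2, a3, a4⟩ := hpc x hx
        refine ⟨?_, a3, fun _ => ⟨a1, a2⟩, ?_⟩
        · simp only; linarith
        · simp only; intro h; linarith
    have hu := hs.union ih' (fun x hx hx' =>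
      rowReg_disj (by linarith) x hx' hx)
    rw [Finset.insert_eq]
    refine hu.subset (Set.union_subset ?_ ?_)
    · apply rowReg_mono
      · linarith
      · push_cast; linarith
    · apply rowReg_mono
      · exact le_rfl
      · push_cast; linarith

lemma ch_eq_empty {v : V} (h : T.sz v ≤ 1) : T.ch v = ∅ := by
  by_contra hne
  obtain ⟨c, hc⟩ := Finset.nonempty_iff_ne_empty.2 hne
  have := sz_ch_lt hc
  have := sz_pos (T := T) c
  omega

lemma sz_split [DecidableEq V] {v h : V} (hh : h ∈ T.ch v) :
    T.sz v = 1 + ∑ c ∈ (T.ch v).erase h, T.sz c + T.sz h := by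
  rw [sz_eq, ← Finset.sum_erase_add _ _ hh, add_assoc]

/-- The heavy-path drawing: the heavy child of `v` is put on the row of `v`, to the right of
everything else, and the other children on the row below. -/
lemma bdraw (v : V) : T.BDraw v (Nat.log 2 (T.sz v)) := by
  classical
  generalize hm : T.sz v = m
  induction m using Nat.strong_induction_on generalizing v with
  | _ m ih =>
  rcases Nat.lt_or_ge 1 m with h1 | h1
  · obtain ⟨h, hh, -, hlight⟩ := exists_heavy (T := T) (v := v) (by omega)
    obtain ⟨k, hk⟩ : ∃ k, Nat.log 2 m = k + 1 :=
      Nat.exists_eq_succ_of_ne_zero (Nat.log_pos (by norm_num) (by omega)).ne'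
    have hL : ∀ c ∈ (T.ch v).erase h, T.BDraw c k := by
      intro c hc
      rw [Finset.mem_erase] at hc
      refine (ih _ (by rw [← hm]; exact sz_ch_lt hc.2) c rfl).mono ?_
      have h2 := hlight c hc.2 hc.1
      have h3 : Nat.log 2 (T.sz c * 2) ≤ Nat.log 2 m := Nat.log_mono_right (by omega)
      rw [Nat.log_mul_base (by norm_num) (sz_pos c).ne'] at h3
      omega
    have hrow := row 0 0 1 (by norm_num) _ hL
    have hsz := sz_split hh
    set N := ∑ c ∈ (T.ch v).erase h, T.sz c with hN
    obtain ⟨f, hf, hf0, hfp⟩ := (ih _ (by rw [← hm]; exact sz_ch_lt hh) h rfl).mono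
      (Nat.log_mono_right (b := 2) (show T.sz h ≤ m by rw [← hm]; exact (sz_ch_lt hh).le))
    obtain ⟨f', hf', hf0', hfp'⟩ := hf.shift RB_shift (1 + N) 0
    rw [hf0] at hf0'
    have hNr : (0 : ℝ) ≤ N := by positivity
    have hroot : f' h = (1 + (N : ℝ), 0) := by
      rw [hf0']; push_cast; simp
    have hszc : (1 : ℝ) ≤ T.sz h := by exact_mod_cast sz_pos (T := T) h
    have hpc : ∀ x ∈ T.piece f' h, 1 + (N : ℝ) ≤ x.1 ∧ x.1 ≤ N + T.sz h ∧
        -((k : ℝ) + 1) ≤ x.2 ∧ x.2 ≤ 0 := by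
      intro x hx
      obtain ⟨y, hy, e1, e2⟩ := hfp' x hx
      obtain ⟨a1, a2, a3, a4⟩ := hfp y hy
      rw [hk] at a3
      push_cast at e1 e2 a3
      rw [e1, e2]
      refine ⟨?_, ?_, ?_, ?_⟩ <;> linarith
    have hs : T.Fan RB (((0 : ℤ) : ℝ), ((0 : ℤ) : ℝ)) {h}
        {x | 0 < x.1 ∧ x.1 ≤ N + T.sz h ∧ -((k : ℝ) + 1) ≤ x.2 ∧ x.2 ≤ 0 ∧
          (x.1 < 1 + N → x.2 = 0)} := by
      apply fan_single hf'
      · rw [hroot]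
        exact ⟨by simp; linarith, by simp⟩
      · rintro x ⟨t, h0, h1, e1, e2⟩ hx
        rw [hroot] at e1
        have := (hpc x hx).1
        simp only [Int.cast_zero] at e1
        nlinarith
      · rintro x ⟨t, h0, h1, e1, e2⟩
        rw [hroot] at e1 e2
        simp only [Int.cast_zero] at e1 e2
        have e3 : x.2 = 0 := by rw [e2]; ring
        refine ⟨?_, ?_, ?_, ?_, fun _ => e3⟩
        · rw [e1]; nlinarith
        · rw [e1]; nlinarith
        · rw [e3]; have : (0 : ℝ) ≤ k := by positivity
          linarith
        · rw [e3]
      · intro x hx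
        obtain ⟨a1, a2, a3, a4⟩ := hpc x hx
        exact ⟨by linarith, a2, a3, a4, fun h => by linarith⟩
    have hu := hrow.union hs (by
      rintro x hx ⟨b1, b2, b3, b4, b5⟩
      have h0 := rowReg_bounds (by simp) (Or.inr (by push_cast; linarith)) hx
      have hx2 := hx.1
      simp only [Int.cast_zero, Int.cast_one] at h0 hx2
      have := b5 (by linarith [h0.2.1])
      linarith)
    rw [Finset.union_comm, ← Finset.insert_eq, Finset.insert_erase hh] at hu
    obtain ⟨F, hF, hF0, hFp⟩ := hu.compose ⟨0, 0, rfl⟩ (by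
      rintro (hx | hx)
      · simpa using hx.1
      · simpa using hx.1)
    refine ⟨F, hF, by simpa using hF0, fun x hx => ?_⟩
    rw [hk, hsz]
    push_cast
    rcases hFp hx with rfl | hx | hx
    · have : (0 : ℝ) ≤ k := by positivity
      refine ⟨by simp, ?_, ?_, by simp⟩ <;> push_cast <;> linarith
    · have h0 := rowReg_bounds (by simp) (Or.inr (by push_cast; linarith)) hx
      have hx2 := hx.1
      have hx3 := hx.2.1
      simp only [Int.cast_zero, Int.cast_one] at h0 hx2 hx3
      refine ⟨h0.1, ?_, ?_, hx2.le⟩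
      · linarith [h0.2.1]
      · linarith
    · obtain ⟨b1, b2, b3, b4, b5⟩ := hx
      refine ⟨b1.le, ?_, b3, b4⟩
      linarith
  · have hch := ch_eq_empty (T := T) (v := v) (by omega)
    obtain ⟨F, hF, hF0, hFp⟩ := Fan.compose (R := RB) (p := (0, 0)) (A := ∅)
      (hch ▸ fan_empty _ _) ⟨0, 0, by simp⟩ (by simp)
    refine ⟨F, hF, hF0, fun x hx => ?_⟩
    rcases hFp hx with rfl | hx
    · have : (1 : ℝ) ≤ T.sz v := by exact_mod_cast sz_pos (T := T) v
      simp
      exact_mod_cast this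
    · exact absurd hx (by simp)

end

end RT

/-! ### Primitive vectors -/

/-- The primitive vectors with coordinates in `1, …, P` and `1, …, Q`. -/
def prim (P Q : ℕ) : Finset (ℕ × ℕ) :=
  (Finset.Icc 1 P ×ˢ Finset.Icc 1 Q).filter fun x => x.1.Coprime x.2

lemma mem_prim {P Q : ℕ} {x : ℕ × ℕ} :
    x ∈ prim P Q ↔ (1 ≤ x.1 ∧ x.1 ≤ P) ∧ (1 ≤ x.2 ∧ x.2 ≤ Q) ∧ x.1.Coprime x.2 := by
  simp [prim, and_assoc]

lemma sum_inv_sq_le (n : ℕ) :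
    ∑ k ∈ Finset.Icc 2 (n + 2), (1 : ℝ) / (k : ℝ) ^ 2 ≤ 3 / 4 - 1 / ((n : ℝ) + 2) := by
  induction n with
  | zero => norm_num
  | succ n ih =>
    have hn : (0 : ℝ) ≤ n := by positivity
    have : (1 : ℝ) / ((n + 1 + 2 : ℕ) : ℝ) ^ 2 ≤ 1 / ((n : ℝ) + 2) - 1 / ((n : ℝ) + 1 + 2) := by
      push_cast
      rw [div_sub_div _ _ (by positivity) (by positivity), div_le_div_iff₀ (by positivity)
        (by positivity)]
      nlinarith
    have e : ((n + 1 + 2 : ℕ) : ℝ) = (n + 1 : ℕ) + 2 := by push_cast; ring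
    rw [e] at this
    have e' : ((n + 2 + 1 : ℕ) : ℝ) = (n + 1 : ℕ) + 2 := by push_cast; ring
    rw [show n + 1 + 2 = n + 2 + 1 by ring, Finset.sum_Icc_succ_top (by omega), e']
    push_cast at this ⊢
    linarith

/-- At least a quarter of all vectors in a box are primitive: those divisible by `k` make up a
fraction of at most `1 / k²`. -/
lemma card_prim (P Q : ℕ) : P * Q ≤ 4 * (prim P Q).card := by
  have hsub : Finset.Icc 1 P ×ˢ Finset.Icc 1 Q ⊆ prim P Q ∪
      (Finset.Icc 2 (P + 2)).biUnion fun k =>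
        (Finset.Icc 1 (P / k) ×ˢ Finset.Icc 1 (Q / k)).image fun x => (k * x.1, k * x.2) := by
    rintro ⟨x, y⟩ hx
    simp only [Finset.mem_product, Finset.mem_Icc] at hx
    obtain ⟨⟨hx1, hx2⟩, hy1, hy2⟩ := hx
    rw [Finset.mem_union]
    by_cases hc : x.Coprime y
    · exact Or.inl (mem_prim.2 ⟨⟨hx1, hx2⟩, ⟨hy1, hy2⟩, hc⟩)
    · right
      rw [Finset.mem_biUnion]
      have hg : 0 < x.gcd y := Nat.gcd_pos_of_pos_left _ hx1
      have hg1 : x.gcd y ≠ 1 := hc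
      have hgx : x.gcd y ≤ x := Nat.gcd_le_left _ hx1
      refine ⟨x.gcd y, Finset.mem_Icc.2 ⟨by omega, by omega⟩, ?_⟩
      rw [Finset.mem_image]
      refine ⟨(x / x.gcd y, y / x.gcd y), ?_, ?_⟩
      · simp only [Finset.mem_product, Finset.mem_Icc]
        exact ⟨⟨Nat.div_pos hgx hg, Nat.div_le_div_right hx2⟩,
          Nat.div_pos (Nat.gcd_le_right _ hy1) hg, Nat.div_le_div_right hy2⟩
      · simp only [Prod.mk.injEq]
        exact ⟨Nat.mul_div_cancel' (Nat.gcd_dvd_left _ _),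
          Nat.mul_div_cancel' (Nat.gcd_dvd_right _ _)⟩
  have h1 := (Finset.card_le_card hsub).trans (Finset.card_union_le _ _)
  have h2 : ((Finset.Icc 2 (P + 2)).biUnion fun k =>
        (Finset.Icc 1 (P / k) ×ˢ Finset.Icc 1 (Q / k)).image
          fun x : ℕ × ℕ => (k * x.1, k * x.2)).card
      ≤ ∑ k ∈ Finset.Icc 2 (P + 2), (P / k) * (Q / k) := by
    refine Finset.card_biUnion_le.trans (Finset.sum_le_sum fun k _ => ?_)
    refine Finset.card_image_le.trans ?_
    simp
  rw [Finset.card_product, Nat.card_Icc, Nat.card_Icc, Nat.add_sub_cancel,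
    Nat.add_sub_cancel] at h1
  have h3 : ((∑ k ∈ Finset.Icc 2 (P + 2), (P / k) * (Q / k) : ℕ) : ℝ)
      ≤ P * Q * (3 / 4) := by
    push_cast
    calc ∑ k ∈ Finset.Icc 2 (P + 2), (((P / k : ℕ) : ℝ) * ((Q / k : ℕ) : ℝ))
        ≤ ∑ k ∈ Finset.Icc 2 (P + 2), (P * Q : ℝ) * (1 / (k : ℝ) ^ 2) := by
          refine Finset.sum_le_sum fun k hk => ?_
          have hk : (0 : ℝ) < k := by
            have := (Finset.mem_Icc.1 hk).1
            exact_mod_cast (by omega : 0 < k)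
          calc ((P / k : ℕ) : ℝ) * ((Q / k : ℕ) : ℝ) ≤ (P / k : ℝ) * (Q / k : ℝ) := by
                apply mul_le_mul Nat.cast_div_le Nat.cast_div_le <;> positivity
            _ = (P * Q : ℝ) * (1 / (k : ℝ) ^ 2) := by field_simp
      _ = (P * Q : ℝ) * ∑ k ∈ Finset.Icc 2 (P + 2), 1 / (k : ℝ) ^ 2 := by
          rw [Finset.mul_sum]
      _ ≤ P * Q * (3 / 4) := by
          apply mul_le_mul_of_nonneg_left _ (by positivity)
          have := sum_inv_sq_le P
          have h0 : (0 : ℝ) ≤ 1 / ((P : ℝ) + 2) := by positivity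
          linarith
  have h4 : (P * Q : ℝ) ≤ (prim P Q).card + P * Q * (3 / 4) := by
    have : ((P * Q : ℕ) : ℝ) ≤ (((prim P Q).card +
        ∑ k ∈ Finset.Icc 2 (P + 2), (P / k) * (Q / k) : ℕ) : ℝ) := by
      exact_mod_cast h1.trans (Nat.add_le_add_left h2 _)
    push_cast at this h3
    linarith
  have : (P * Q : ℝ) ≤ 4 * (prim P Q).card := by linarith
  exact_mod_cast this

/-- Distinct primitive vectors can be assigned to weighted items so that an item of weight `a` gets
one from the `P / a` by `Q / a` box.  This is done greedily by decreasing weight: when an item of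
weight `a` is treated, at most `M / a` vectors have been used. -/
lemma exists_dirs {V : Type} [DecidableEq V] (a : V → ℕ) (P Q M : ℕ) (C : Finset V)
    (hC : ∀ c ∈ C, M ≤ a c * (prim (P / a c) (Q / a c)).card)
    (hM : ∑ c ∈ C, a c ≤ M) (ha : ∀ c ∈ C, 0 < a c) :
    ∃ d : V → ℕ × ℕ, (∀ c ∈ C, d c ∈ prim (P / a c) (Q / a c)) ∧ Set.InjOn d C := by
  induction C using Finset.induction_on_min_value a with
  | empty => exact ⟨fun _ => 0, by simp, by simp⟩
  | insert c C hc hmin ih =>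
    rw [Finset.sum_insert hc] at hM
    obtain ⟨d, hd, hinj⟩ := ih (fun x hx => hC x (Finset.mem_insert_of_mem hx)) (by omega)
      (fun x hx => ha x (Finset.mem_insert_of_mem hx))
    have hc0 := ha c (Finset.mem_insert_self _ _)
    have hcard : (C.image d).card < (prim (P / a c) (Q / a c)).card := by
      refine lt_of_le_of_lt Finset.card_image_le ?_
      have h1 : C.card * a c ≤ ∑ x ∈ C, a x := by
        rw [← smul_eq_mul]
        exact Finset.card_nsmul_le_sum _ _ _ hmin
      have h2 := hC c (Finset.mem_insert_self _ _)
      by_contra hcon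
      have h3 : a c * (prim (P / a c) (Q / a c)).card ≤ a c * C.card :=
        Nat.mul_le_mul_left _ (not_lt.1 hcon)
      rw [Nat.mul_comm (C.card)] at h1
      omega
    obtain ⟨u, hu, hu'⟩ := Finset.exists_mem_notMem_of_card_lt_card hcard
    refine ⟨fun x => if x = c then u else d x, ?_, ?_⟩
    · intro x hx
      rcases Finset.mem_insert.1 hx with rfl | hx
      · simpa using hu
      · have : x ≠ c := fun e => hc (e ▸ hx)
        simpa [this] using hd x hx
    · intro x hx y hy hxy
      have hx := Finset.mem_insert.1 hx
      have hy := Finset.mem_insert.1 hy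
      by_cases ex : x = c <;> by_cases ey : y = c
      · rw [ex, ey]
      · simp only [ex, ey, if_true, if_false] at hxy
        exact absurd (Finset.mem_image.2 ⟨y, hy.resolve_left ey, hxy.symm⟩) hu'
      · simp only [ex, ey, if_true, if_false] at hxy
        exact absurd (Finset.mem_image.2 ⟨x, hx.resolve_left ex, hxy⟩) hu'
      · simp only [ex, ey, if_false] at hxy
        exact hinj (hx.resolve_left ex) (hy.resolve_left ey) hxy

/-- `e` completes the primitive vector `u` to a positively oriented lattice basis, and is chosen in
the `P` by `Q` box as large as possible, so that `u + e` leaves the box. -/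
def Comp (P Q : ℕ) (u e : ℕ × ℕ) : Prop :=
  e.1 ≤ P ∧ e.2 ≤ Q ∧ u.1 * e.2 = u.2 * e.1 + 1 ∧ ¬ (u.1 + e.1 ≤ P ∧ u.2 + e.2 ≤ Q)

lemma exists_comp {P Q : ℕ} {u : ℕ × ℕ} (hu : u ∈ prim P Q) : ∃ e, Comp P Q u e := by
  obtain ⟨⟨p1, pP⟩, ⟨q1, qQ⟩, hco⟩ := mem_prim.1 hu
  have hbase : ∃ e : ℕ × ℕ, e.1 ≤ P ∧ e.2 ≤ Q ∧ u.1 * e.2 = u.2 * e.1 + 1 := by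
    rcases Nat.lt_or_ge 1 u.2 with h | h
    · obtain ⟨m, hm⟩ := Nat.exists_mul_mod_eq_one_of_coprime hco h
      set m' := m % u.2 with hm'
      have hlt : m' < u.2 := Nat.mod_lt _ (by omega)
      have hmod : u.1 * m' % u.2 = 1 := by
        rw [hm', Nat.mul_mod, Nat.mod_mod, ← Nat.mul_mod]; exact hm.2
      have hdiv := Nat.div_add_mod (u.1 * m') u.2
      rw [hmod] at hdiv
      refine ⟨(u.1 * m' / u.2, m'), ?_, by simp only; omega, hdiv.symm⟩
      have : u.1 * m' / u.2 ≤ u.1 := by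
        apply Nat.div_le_of_le_mul
        rw [Nat.mul_comm]
        exact Nat.mul_le_mul_right _ hlt.le
      exact this.trans pP
    · have : u.2 = 1 := by omega
      refine ⟨(u.1 - 1, 1), by simp only; omega, by simp only; omega, ?_⟩
      simp only [this]
      omega
  obtain ⟨e₀, h1, h2, h3⟩ := hbase
  obtain ⟨e, he, hmax⟩ := Finset.exists_max_image
    ((Finset.Icc 0 P ×ˢ Finset.Icc 0 Q).filter fun e : ℕ × ℕ => u.1 * e.2 = u.2 * e.1 + 1)
    (fun e => e.1 + e.2) ⟨e₀, by simp [h1, h2, h3]⟩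
  simp only [Finset.mem_filter, Finset.mem_product, Finset.mem_Icc, zero_le, true_and] at he hmax
  refine ⟨e, he.1.1, he.1.2, he.2, fun hcon => ?_⟩
  have := hmax (u.1 + e.1, u.2 + e.2) ⟨hcon, by simp only; rw [mul_add, mul_add, he.2]; ring⟩
  simp only at this
  omega

/-- Farey separation: no other primitive vector of the box lies in the cone spanned by `u` and
`u + e`.  Hence for a vector `v` on the positive side of `u`, both `v` and its companion are beyond
the line through `u + e`. -/
lemma comp_sep {P Q : ℕ} {u v e d : ℕ × ℕ} (hv : v ∈ prim P Q)
    (he : Comp P Q u e) (hd : Comp P Q v d) (huv : u.2 * v.1 < u.1 * v.2) :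
    (u.2 + e.2) * v.1 < (u.1 + e.1) * v.2 ∧ (u.2 + e.2) * d.1 < (u.1 + e.1) * d.2 := by
  obtain ⟨⟨p1, pP⟩, ⟨q1, qQ⟩, -⟩ := mem_prim.1 hv
  obtain ⟨-, -, he3, he4⟩ := he
  obtain ⟨-, -, hd3, -⟩ := hd
  obtain ⟨a, b⟩ := u
  obtain ⟨c, d'⟩ := v
  obtain ⟨a', b'⟩ := e
  obtain ⟨e1, e2⟩ := d
  simp only at *
  have hfirst : (b + b') * c < (a + a') * d' := by
    by_contra hcon
    apply he4
    zify at *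
    set α : ℤ := c * b' - d' * a' with hα
    set β : ℤ := a * d' - b * c with hβ
    have e₁ : (c : ℤ) = α * a + β * a' := by
      rw [hα, hβ]; linear_combination -(c : ℤ) * he3
    have e₂ : (d' : ℤ) = α * b + β * b' := by
      rw [hα, hβ]; linear_combination -(d' : ℤ) * he3
    have hβ1 : 1 ≤ β := by rw [hβ]; linarith
    have hαβ : β ≤ α := by rw [hα, hβ]; linarith
    have ha : (0 : ℤ) ≤ a := by positivity
    have hb : (0 : ℤ) ≤ b := by positivity
    have ha' : (0 : ℤ) ≤ a' := by positivity
    have hb' : (0 : ℤ) ≤ b' := by positivity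
    constructor <;> nlinarith
  refine ⟨hfirst, ?_⟩
  zify at *
  have key : (d' : ℤ) * ((a + a') * e2 - (b + b') * e1)
      = e2 * ((a + a') * d' - (b + b') * c) + (b + b') := by
    linear_combination ((b : ℤ) + b') * hd3
  have h2 : (0 : ℤ) ≤ e2 := by positivity
  have hb : (0 : ℤ) ≤ b := by positivity
  have hb' : (0 : ℤ) ≤ b' := by positivity
  have h3 : (0 : ℤ) < e2 := by
    rcases h2.lt_or_eq with h | h
    · exact h
    · rw [← h] at hd3
      have : (0 : ℤ) ≤ d' * e1 := by positivity
      linarith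
  have h4 : 0 < (d' : ℤ) * ((a + a') * e2 - (b + b') * e1) := by
    rw [key]
    have := mul_pos h3 (sub_pos.2 hfirst)
    linarith
  have := pos_of_mul_pos_right h4 (by positivity)
  linarith

lemma prim_cross_ne {P Q : ℕ} {u v : ℕ × ℕ} (hu : u ∈ prim P Q) (hv : v ∈ prim P Q)
    (hne : u ≠ v) : u.2 * v.1 ≠ u.1 * v.2 := by
  intro h
  obtain ⟨⟨p1, -⟩, -, hco⟩ := mem_prim.1 hu
  obtain ⟨⟨p1', -⟩, -, hco'⟩ := mem_prim.1 hv
  apply hne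
  have h1 : u.1 ∣ v.1 := hco.dvd_of_dvd_mul_left ⟨v.2, h⟩
  have h2 : v.1 ∣ u.1 := hco'.dvd_of_dvd_mul_left ⟨u.2, by rw [mul_comm v.2, ← h, mul_comm]⟩
  have h3 := Nat.dvd_antisymm h1 h2
  rw [h3] at h
  ext
  · exact h3
  · rw [mul_comm] at h
    exact Nat.eq_of_mul_eq_mul_left (by omega) h

/-! ### Many small subtrees below a common apex -/

/-- The part of the lattice cone between `u` and `u + e`, reflected to the lower half plane, that
is used by a child in direction `u`. -/
def cone (u e : ℕ × ℕ) (k j : ℝ) : Set (ℝ × ℝ) :=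
  {x | ∃ K J : ℝ, 0 ≤ J ∧ J < K ∧ K ≤ k ∧ J ≤ j ∧
    x = (K * u.1 + J * e.1, -(K * u.2 + J * e.2))}

lemma cone_disj {P Q : ℕ} {u v e d : ℕ × ℕ} (hu : u ∈ prim P Q) (hv : v ∈ prim P Q)
    (he : Comp P Q u e) (hd : Comp P Q v d) (hne : u ≠ v) {k j k' j' : ℝ} :
    ∀ x ∈ cone u e k j, x ∉ cone v d k' j' := by
  -- the linear functional `w.2 * x.1 + w.1 * x.2` with `w = u + e` separates the two cones
  have key : ∀ {u v e d : ℕ × ℕ} (_ : v ∈ prim P Q) (_ : Comp P Q u e) (_ : Comp P Q v d)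
      {k j k' j' : ℝ}, u.2 * v.1 < u.1 * v.2 → ∀ x ∈ cone u e k j, x ∉ cone v d k' j' := by
    intro u v e d hv he hd k j k' j' huv x hx hx'
    obtain ⟨h1, h2⟩ := comp_sep hv he hd huv
    obtain ⟨-, -, h3, -⟩ := he
    obtain ⟨K, J, a1, a2, -, -, ex⟩ := hx
    obtain ⟨K', J', b1, b2, -, -, ex'⟩ := hx'
    rw [ex] at ex'
    simp only [Prod.mk.injEq] at ex'
    obtain ⟨e1, e2⟩ := ex'
    have h1' : ((u.2 : ℝ) + e.2) * v.1 < (u.1 + e.1) * v.2 := by exact_mod_cast h1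
    have h2' : ((u.2 : ℝ) + e.2) * d.1 < (u.1 + e.1) * d.2 := by exact_mod_cast h2
    have h3' : (u.1 : ℝ) * e.2 = u.2 * e.1 + 1 := by exact_mod_cast h3
    have f1 : K - J = K' * ((u.2 + e.2) * v.1 - (u.1 + e.1) * v.2)
        + J' * ((u.2 + e.2) * d.1 - (u.1 + e.1) * d.2) := by
      linear_combination (u.2 + e.2 : ℝ) * e1 + (u.1 + e.1 : ℝ) * e2 - (K - J) * h3'
    have f2 : K' * (((u.2 : ℝ) + e.2) * v.1 - (u.1 + e.1) * v.2) ≤ 0 :=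
      mul_nonpos_of_nonneg_of_nonpos (by linarith) (by linarith)
    have f3 : J' * (((u.2 : ℝ) + e.2) * d.1 - (u.1 + e.1) * d.2) ≤ 0 :=
      mul_nonpos_of_nonneg_of_nonpos b1 (by linarith)
    linarith
  intro x hx hx'
  rcases lt_or_gt_of_ne (prim_cross_ne hu hv hne) with h | h
  · exact key hv he hd h x hx hx'
  · exact key hu hd he (by rw [mul_comm v.2, mul_comm v.1]; exact h) x hx' hx

namespace RT

section
variable {V : Type} [Fintype V] {T : RT V}

/-- A flat drawing is sheared into the cone of a direction `u`, with its root at `b • u`. -/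
lemma cone_draw {c : V} {b : ℕ} (hb : 1 ≤ b) (h : T.BDraw c (b - 1)) {P Q : ℕ} {u e : ℕ × ℕ}
    (he : Comp P Q u e) :
    T.Fan RUp (0, 0) {c} (cone u e (T.sz c - 1 + b) (b - 1)) := by
  obtain ⟨f, hf, hf0, hfp⟩ := h
  have hbr : (1 : ℝ) ≤ b := by exact_mod_cast hb
  rw [Nat.cast_sub hb, Nat.cast_one] at hfp
  obtain ⟨-, -, hdet, -⟩ := he
  have hdetr : (u.1 : ℝ) * e.2 = u.2 * e.1 + 1 := by exact_mod_cast hdet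
  have hu2 : (0 : ℝ) ≤ u.2 := by positivity
  have he2 : (0 : ℝ) ≤ e.2 := by positivity
  have hsz : (1 : ℝ) ≤ T.sz c := by exact_mod_cast sz_pos (T := T) c
  obtain ⟨h1, h2⟩ := hf.aff (R' := RUp) (b * u.1) (-(b * u.2)) u.1 (-u.2) (-e.1) e.2
    (by
      have : ((u.1 : ℤ)) * e.2 = u.2 * e.1 + 1 := by exact_mod_cast hdet
      have : (u.1 : ℤ) * e.2 - -u.2 * -e.1 = 1 := by linear_combination this
      rw [this]; norm_num)
    (by
      rintro p q ⟨r1, r2⟩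
      simp only [RUp, aff]
      push_cast
      nlinarith)
  have hpc : ∀ y ∈ T.piece f c, aff ((b * u.1 : ℤ) : ℝ) ((-(b * u.2) : ℤ) : ℝ) ((u.1 : ℤ) : ℝ)
      ((-u.2 : ℤ) : ℝ) ((-e.1 : ℤ) : ℝ) ((e.2 : ℤ) : ℝ) y
      = ((b + y.1) * u.1 + (-y.2) * e.1, -((b + y.1) * u.2 + (-y.2) * e.2)) := by
    intro y _
    simp only [aff]
    push_cast
    ext <;> simp only <;> ring
  have hroot := hpc (f c) (root_mem_piece f c)
  rw [hf0] at hroot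
  simp only [add_zero, neg_zero, zero_mul] at hroot
  apply fan_single h1
  · simp only [hf0, hroot, RUp]
    have : (0 : ℝ) ≤ b * u.2 := by positivity
    linarith
  · rintro x ⟨t, t0, t1, e1, e2⟩ hx
    simp only [hf0, hroot] at e1 e2
    obtain ⟨y, hy, rfl⟩ := h2 x hx
    rw [hpc y hy] at e1 e2
    simp only at e1 e2
    obtain ⟨a1, a2, a3, a4⟩ := hfp y hy
    have : b + y.1 = t * b := by
      linear_combination (e.2 : ℝ) * e1 + (e.1 : ℝ) * e2 - (b + y.1 - t * b) * hdetr
    nlinarith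
  · rintro x ⟨t, t0, t1, e1, e2⟩
    simp only [hf0, hroot] at e1 e2
    refine ⟨t * b, 0, le_rfl, by positivity, by nlinarith, by linarith, ?_⟩
    ext
    · rw [e1]; ring
    · rw [e2]; ring
  · intro x hx
    obtain ⟨y, hy, rfl⟩ := h2 x hx
    obtain ⟨a1, a2, a3, a4⟩ := hfp y hy
    exact ⟨b + y.1, -y.2, by linarith, by linarith, by linarith, by linarith, hpc y hy⟩

/-- The region used by the small children of the root: all columns from `1` on, and rows down to
`-h`.  The column of the root stays free. -/
def starReg (W h : ℝ) : Set (ℝ × ℝ) :=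
  {x | 0 < x.1 ∧ x.1 ≤ W ∧ -h ≤ x.2 ∧ x.2 < 0 ∧ -h * x.1 ≤ x.2}

/-- Children with small subtrees, of total size `N`, in height `O(b * (N / s + 1))` and width
`O(b * s²)`.  If `N ≤ s²` they fit side by side.  Otherwise they go to distinct primitive
directions. -/
lemma star {s b : ℕ} (hs : 1 ≤ s) (hb : 1 ≤ b) (hsb : s ≤ 2 ^ b) (C : Finset V)
    (hC : ∀ c ∈ C, T.sz c < s) :
    ∃ h : ℕ, 1 ≤ h ∧ s * h ≤ 34 * b * (∑ c ∈ C, T.sz c) + b * s ∧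
      T.Fan RUp (0, 0) C (starReg (2 * b * s ^ 2) h) := by
  classical
  have hbd : ∀ c ∈ C, T.BDraw c (b - 1) := by
    intro c hc
    refine (bdraw c).mono ?_
    have : Nat.log 2 (T.sz c) < b := Nat.log_lt_of_lt_pow (sz_pos c).ne' ((hC c hc).trans_le hsb)
    omega
  have hbr : (1 : ℝ) ≤ b := by exact_mod_cast hb
  have hsr : (1 : ℝ) ≤ s := by exact_mod_cast hs
  set N := ∑ c ∈ C, T.sz c with hN
  rcases Nat.lt_or_ge (s ^ 2) N with hNs | hNs
  · set P := s ^ 2 with hP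
    set Q := 16 * N / s + 1 with hQ
    have hQ1 : 16 * N < s * Q := by
      rw [hQ]
      exact Nat.lt_mul_div_succ _ (by omega)
    have hQ2 : s * Q ≤ 16 * N + s := by
      rw [hQ, mul_add, mul_one]
      exact Nat.add_le_add_right (Nat.mul_div_le _ _) _
    have hsP : s ≤ P := by rw [hP]; nlinarith
    have hsQ : s ≤ Q := by
      by_contra hcon
      have : s * Q ≤ s * s := Nat.mul_le_mul_left _ (by omega)
      have : s * s = P := by rw [hP]; ring
      omega
    obtain ⟨d, hd, hinj⟩ := exists_dirs (T.sz) P Q N C (by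
      intro c hc
      set a := T.sz c with ha
      have ha0 : 0 < a := sz_pos c
      have has : a < s := hC c hc
      have h1 := card_prim (P / a) (Q / a)
      have hdiv : ∀ X, s ≤ X → X ≤ 2 * (a * (X / a)) := by
        intro X hX
        have h1 : X < a * (X / a + 1) := Nat.lt_mul_div_succ _ ha0
        have h2 : 0 < X / a := Nat.div_pos (by omega) ha0
        have h3 : a * 1 ≤ a * (X / a) := Nat.mul_le_mul_left _ h2
        rw [mul_add] at h1
        omega
      have h2 := Nat.mul_le_mul (hdiv P hsP) (hdiv Q hsQ)
      have h3 : a * a * (P / a * (Q / a)) ≤ a * a * (4 * (prim (P / a) (Q / a)).card) :=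
        Nat.mul_le_mul_left _ h1
      have h4 : s * (16 * N) ≤ P * Q := by
        calc s * (16 * N) ≤ s * (s * Q) := Nat.mul_le_mul_left _ hQ1.le
          _ = P * Q := by rw [hP]; ring
      have h5 : a * (16 * N) ≤ s * (16 * N) := Nat.mul_le_mul_right _ has.le
      have h6 : a * (16 * N) ≤ a * (16 * (a * (prim (P / a) (Q / a)).card)) := by
        nlinarith
      have := Nat.le_of_mul_le_mul_left h6 ha0
      omega) le_rfl (fun c _ => sz_pos c)
    have hprim : ∀ c ∈ C, d c ∈ prim P Q := by
      intro c hc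
      obtain ⟨⟨h1, h2⟩, ⟨h3, h4⟩, h5⟩ := mem_prim.1 (hd c hc)
      exact mem_prim.2 ⟨⟨h1, h2.trans (Nat.div_le_self _ _)⟩,
        ⟨h3, h4.trans (Nat.div_le_self _ _)⟩, h5⟩
    have hcomp : ∀ c, ∃ e, c ∈ C → Comp P Q (d c) e := by
      intro c
      by_cases hc : c ∈ C
      · obtain ⟨e, he⟩ := exists_comp (hprim c hc)
        exact ⟨e, fun _ => he⟩
      · exact ⟨0, fun h => absurd h hc⟩
    choose e he using hcomp
    -- the individual fans are collected into one
    have hall : ∀ C' : Finset V, C' ⊆ C → T.Fan RUp (0, 0) C'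
        {x | ∃ c ∈ C', x ∈ cone (d c) (e c) (T.sz c - 1 + b) (b - 1)} := by
      intro C'
      induction C' using Finset.induction_on with
      | empty => exact fun _ => fan_empty _ _
      | insert c C' hc ih =>
        intro hsub
        have hcC : c ∈ C := hsub (Finset.mem_insert_self _ _)
        have hsub' : C' ⊆ C := fun x hx => hsub (Finset.mem_insert_of_mem hx)
        have h1 := cone_draw hb (hbd c hcC) (he c hcC)
        have h2 := h1.union (ih hsub') (by
          rintro x hx ⟨c', hc', hx'⟩
          refine cone_disj (hprim c hcC) (hprim c' (hsub' hc')) (he c hcC) (he c' (hsub' hc'))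
            ?_ x hx hx'
          intro heq
          have := hinj hcC (hsub' hc') heq
          exact hc (this ▸ hc'))
        rw [Finset.insert_eq]
        refine h2.subset (Set.union_subset ?_ ?_)
        · exact fun x hx => ⟨c, by simp, hx⟩
        · rintro x ⟨c', hc', hx⟩
          exact ⟨c', by simp [hc'], hx⟩
    refine ⟨2 * b * Q, ?_, ?_, (hall C subset_rfl).subset ?_⟩
    · have : 1 ≤ Q := by omega
      nlinarith [Nat.mul_le_mul hb this]
    · have : 2 * b * (s * Q) ≤ 2 * b * (17 * N) := Nat.mul_le_mul_left _ (by omega)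
      nlinarith
    · rintro x ⟨c, hc, K, J, h1, h2, h3, h4, rfl⟩
      obtain ⟨⟨p1, p2⟩, ⟨q1, q2⟩, -⟩ := mem_prim.1 (hd c hc)
      obtain ⟨e1, e2, -, -⟩ := he c hc
      have ha : (1 : ℝ) ≤ T.sz c := by exact_mod_cast sz_pos (T := T) c
      have p2' : (T.sz c : ℝ) * (d c).1 ≤ P := by
        have := (Nat.le_div_iff_mul_le (sz_pos c)).1 p2
        rw [mul_comm]; exact_mod_cast this
      have q2' : (T.sz c : ℝ) * (d c).2 ≤ Q := by
        have := (Nat.le_div_iff_mul_le (sz_pos c)).1 q2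
        rw [mul_comm]; exact_mod_cast this
      have p1' : (1 : ℝ) ≤ (d c).1 := by exact_mod_cast p1
      have q1' : (1 : ℝ) ≤ (d c).2 := by exact_mod_cast q1
      have e1' : ((e c).1 : ℝ) ≤ P := by exact_mod_cast e1
      have e2' : ((e c).2 : ℝ) ≤ Q := by exact_mod_cast e2
      have e10 : (0 : ℝ) ≤ (e c).1 := by positivity
      have e20 : (0 : ℝ) ≤ (e c).2 := by positivity
      have p3' : ((d c).1 : ℝ) ≤ P := by nlinarith
      have q3' : ((d c).2 : ℝ) ≤ Q := by nlinarith
      have hK : 0 < K := by linarith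
      -- each coordinate is at most `K * p + J * p' ≤ (sz c) * p + (b - 1) * p + (b - 1) * p'`
      have bound : ∀ p p' X : ℝ, 1 ≤ p → 0 ≤ p' → T.sz c * p ≤ X → p ≤ X → p' ≤ X →
          K * p + J * p' ≤ 2 * b * X := by
        intro p p' X g1 g2 g3 g4 g5
        have k1 : K * p ≤ (T.sz c - 1 + b) * p := mul_le_mul_of_nonneg_right h3 (by linarith)
        have k2 : J * p' ≤ (b - 1) * X := mul_le_mul h4 g5 g2 (by linarith)
        have k3 : (b - 1) * p ≤ (b - 1) * X := mul_le_mul_of_nonneg_left g4 (by linarith)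
        nlinarith
      have hx1 : K ≤ K * (d c).1 + J * (e c).1 := by
        have : 0 ≤ J * (e c).1 := by positivity
        nlinarith
      have hP' : ((P : ℕ) : ℝ) = (s : ℝ) ^ 2 := by rw [hP]; push_cast; rfl
      refine ⟨by simp only; linarith, ?_, ?_, ?_, ?_⟩
      · simp only; rw [← hP']; exact bound _ _ _ p1' e10 p2' p3' e1'
      · simp only; push_cast
        linarith [bound _ _ _ q1' e20 q2' q3' e2']
      · have : 0 ≤ J * (e c).2 := by positivity
        have : 0 < K * (d c).2 := by positivity
        simp only; linarith
      · simp only; push_cast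
        have k1 : K * (d c).2 ≤ K * Q := mul_le_mul_of_nonneg_left q3' hK.le
        have k2 : J * (e c).2 ≤ K * Q := mul_le_mul h2.le e2' e20 hK.le
        have hQ0 : (0 : ℝ) ≤ Q := by positivity
        have k3 : K * Q ≤ (K * (d c).1 + J * (e c).1) * Q := mul_le_mul_of_nonneg_right hx1 hQ0
        have k4 : (1 : ℝ) * ((K * (d c).1 + J * (e c).1) * Q)
            ≤ b * ((K * (d c).1 + J * (e c).1) * Q) :=
          mul_le_mul_of_nonneg_right hbr ((mul_nonneg hK.le hQ0).trans k3)
        linarith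
  · refine ⟨b, hb, by nlinarith [Nat.zero_le (34 * b * N)], ?_⟩
    have hr := (row 0 0 1 (by norm_num) C hbd).weaken RB_RUp
    simp only [Int.cast_zero, Int.cast_one] at hr
    refine hr.subset ?_
    rintro x ⟨h1, h2, h3, h4⟩
    simp only at h1 h2 h3 h4
    rw [Nat.cast_sub hb, Nat.cast_one] at h2
    rw [← hN] at h3 h4
    have hN' : (N : ℝ) ≤ s ^ 2 := by exact_mod_cast hNs
    have hN'' : (N : ℝ) ≤ 2 * b * s ^ 2 := by nlinarith [sq_nonneg (s : ℝ)]
    have hN0 : (0 : ℝ) ≤ N := by positivity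
    rcases le_or_gt x.2 (0 - 1) with h | h
    · obtain ⟨g1, g2⟩ := h3 h
      refine ⟨by linarith, by linarith, by linarith, h1, by nlinarith⟩
    · obtain ⟨g1, g2⟩ := h4 h
      exact ⟨by linarith, by nlinarith, by linarith, h1, by nlinarith⟩

end

end RT

/-! ### One vertex and its children -/

/-- The region used by drawings stacked on top of each other between the rows `-y₁` and `-y₀`, with
roots in column `1`, and by the edges from the origin to their roots. -/
def stackReg (W y₀ y₁ : ℝ) : Set (ℝ × ℝ) :=
  {x | 0 < x.1 ∧ x.1 ≤ W ∧ (x.1 < 1 → -y₁ * x.1 ≤ x.2 ∧ x.2 < -y₀ * x.1) ∧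
    (1 ≤ x.1 → -y₁ ≤ x.2 ∧ x.2 < -y₀)}

lemma stackReg_disj {W y₀ y₁ W' y₂ y₃ : ℝ} (h : y₁ ≤ y₂) :
    ∀ x ∈ stackReg W y₀ y₁, x ∉ stackReg W' y₂ y₃ := by
  rintro x ⟨a, -, b, c⟩ ⟨-, -, b', c'⟩
  rcases lt_or_ge x.1 1 with hx | hx
  · have := (b hx).1
    have := (b' hx).2
    nlinarith
  · linarith [(c hx).1, (c' hx).2]

lemma stackReg_mono {W y₀ y₁ y₀' y₁' : ℝ} (h0 : y₀' ≤ y₀) (h1 : y₁ ≤ y₁') :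
    stackReg W y₀ y₁ ⊆ stackReg W y₀' y₁' := by
  rintro x ⟨a, a', b, c⟩
  refine ⟨a, a', fun h => ?_, fun h => ?_⟩
  · obtain ⟨b1, b2⟩ := b h
    constructor <;> nlinarith
  · obtain ⟨b1, b2⟩ := c h
    constructor <;> linarith

lemma star_stack_disj {W W' h y : ℝ} :
    ∀ x ∈ RT.starReg W h, x ∉ stackReg W' h y := by
  rintro x ⟨-, -, a, -, b⟩ ⟨-, -, c, d⟩
  rcases lt_or_ge x.1 1 with hx | hx
  · linarith [(c hx).2]
  · linarith [(d hx).2]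

namespace RT

/-- The subtree at `v` has an upward drawing with `v` in the top left corner of a box of `W + 1`
columns and `H + 1` rows. -/
def UDraw {V : Type} [Fintype V] (T : RT V) (v : V) (W H : ℕ) : Prop :=
  ∃ f, T.Good RUp f v ∧ f v = (0, 0) ∧
    ∀ x ∈ T.piece f v, 0 ≤ x.1 ∧ x.1 ≤ W ∧ -(H : ℝ) ≤ x.2 ∧ x.2 ≤ 0

section
variable {V : Type} [Fintype V] {T : RT V}

lemma UDraw.mono {v : V} {W W' H H' : ℕ} (h : T.UDraw v W H) (hW : W ≤ W') (hH : H ≤ H') :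
    T.UDraw v W' H' := by
  obtain ⟨f, h1, h2, h3⟩ := h
  refine ⟨f, h1, h2, fun x hx => ?_⟩
  obtain ⟨a, b, c, d⟩ := h3 x hx
  have : (H : ℝ) ≤ H' := by exact_mod_cast hH
  have : (W : ℝ) ≤ W' := by exact_mod_cast hW
  exact ⟨a, by linarith, by linarith, d⟩

lemma BDraw.udraw {v : V} {H : ℕ} (h : T.BDraw v H) : T.UDraw v (T.sz v) H := by
  obtain ⟨f, h1, h2, h3⟩ := h
  refine ⟨f, h1.weaken RB_RUp, h2, fun x hx => ?_⟩
  obtain ⟨a, b, c, d⟩ := h3 x hx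
  exact ⟨a, by linarith, c, d⟩

lemma UDraw.at {v : V} {W H : ℕ} (h : T.UDraw v W H) (i j : ℤ) :
    ∃ f, T.Good RUp f v ∧ f v = ((i : ℝ), (j : ℝ)) ∧
      ∀ x ∈ T.piece f v, i ≤ x.1 ∧ x.1 ≤ i + W ∧ j - (H : ℝ) ≤ x.2 ∧ x.2 ≤ j := by
  obtain ⟨f, hf, hf0, hfp⟩ := h
  obtain ⟨f', h1, h2, h3⟩ := hf.shift RUp_shift i j
  refine ⟨f', h1, by rw [h2, hf0]; simp, fun x hx => ?_⟩
  obtain ⟨y, hy, e1, e2⟩ := h3 x hx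
  obtain ⟨a1, a2, a3, a4⟩ := hfp y hy
  rw [e1, e2]
  refine ⟨?_, ?_, ?_, ?_⟩ <;> linarith

/-- Drawings of children stacked on top of each other. -/
lemma stack {W : ℕ} (Hc : V → ℕ) (y₀ : ℕ) (C : Finset V)
    (hC : ∀ c ∈ C, ∃ W', W' + 1 ≤ W ∧ T.UDraw c W' (Hc c)) :
    T.Fan RUp (0, 0) C (stackReg W y₀ ((y₀ + ∑ c ∈ C, (Hc c + 1) : ℕ) : ℝ)) := by
  classical
  induction C using Finset.induction_on with
  | empty => exact fan_empty _ _
  | insert c C hc ih =>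
    have ih' := ih fun c' hc' => hC c' (Finset.mem_insert_of_mem hc')
    rw [Finset.sum_insert hc]
    set Y := ∑ c ∈ C, (Hc c + 1) with hY
    obtain ⟨W', hW', hd⟩ := hC c (Finset.mem_insert_self _ _)
    have hW : (W' : ℝ) + 1 ≤ W := by exact_mod_cast hW'
    have hW0 : (0 : ℝ) ≤ W' := by positivity
    have hH0 : (0 : ℝ) ≤ Hc c := by positivity
    have hy0 : (0 : ℝ) ≤ y₀ := by positivity
    have hY0 : (0 : ℝ) ≤ Y := by positivity
    obtain ⟨f, hf, hf0, hfp⟩ := hd.at 1 (-((y₀ + Y + 1 : ℕ) : ℤ))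
    push_cast at hf0 hfp
    have hs : T.Fan RUp (0, 0) {c}
        (stackReg W ((y₀ + Y : ℕ) : ℝ) ((y₀ + Y + (Hc c + 1) : ℕ) : ℝ)) := by
      apply fan_single hf
      · simp only [hf0, RUp]
        linarith
      · rintro x ⟨t, t0, t1, e1, -⟩ hx
        rw [hf0] at e1
        simp only at e1
        linarith [(hfp x hx).1]
      · rintro x ⟨t, t0, t1, e1, e2⟩
        rw [hf0] at e1 e2
        simp only at e1 e2
        have e1' : x.1 = t := by rw [e1]; ring
        push_cast
        refine ⟨by linarith, by linarith, fun _ => ?_, fun h => by linarith⟩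
        rw [e1', e2]
        constructor <;> nlinarith
      · intro x hx
        obtain ⟨a1, a2, a3, a4⟩ := hfp x hx
        push_cast
        refine ⟨by linarith, by linarith, fun h => by linarith, fun _ => ⟨by linarith, by linarith⟩⟩
    have hu := hs.union ih' (fun x hx hx' => stackReg_disj le_rfl x hx' hx)
    rw [Finset.insert_eq]
    refine hu.subset (Set.union_subset (stackReg_mono ?_ ?_) (stackReg_mono le_rfl ?_))
    · push_cast; linarith
    · push_cast; linarith
    · push_cast; linarith

/-- Small children by `star`, further children stacked below them. -/
lemma star_stack {s b W : ℕ} (hs : 1 ≤ s) (hb : 1 ≤ b) (hsb : s ≤ 2 ^ b) (C₀ C₁ : Finset V)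
    (hC₀ : ∀ c ∈ C₀, T.sz c < s) (Hc : V → ℕ) (hW : 2 * b * s ^ 2 ≤ W)
    (hC₁ : ∀ c ∈ C₁, ∃ W', W' + 1 ≤ W ∧ T.UDraw c W' (Hc c)) [DecidableEq V] :
    ∃ Y : ℕ, s * Y ≤ 34 * b * (∑ c ∈ C₀, T.sz c) + b * s + ∑ c ∈ C₁, (s * Hc c + s) ∧
      T.Fan RUp (0, 0) (C₀ ∪ C₁) {x | 0 < x.1 ∧ x.1 ≤ W ∧ -(Y : ℝ) ≤ x.2 ∧ x.2 < 0} := by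
  obtain ⟨h, h1, h2, h3⟩ := star (T := T) hs hb hsb C₀ hC₀
  have h4 := stack Hc h C₁ hC₁
  have h5 := h3.union h4 star_stack_disj
  refine ⟨h + ∑ c ∈ C₁, (Hc c + 1), ?_, ?_⟩
  · rw [mul_add, Finset.mul_sum]
    simp only [mul_add, mul_one]
    omega
  · convert h5.subset (A' := {x | 0 < x.1 ∧ x.1 ≤ W ∧
      -((h + ∑ c ∈ C₁, (Hc c + 1) : ℕ) : ℝ) ≤ x.2 ∧ x.2 < 0}) ?_
    have hW' : (2 * b * s ^ 2 : ℝ) ≤ W := by exact_mod_cast hW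
    have hh : (1 : ℝ) ≤ h := by exact_mod_cast h1
    rintro x (⟨a1, a2, a3, a4, -⟩ | ⟨a1, a2, a3, a4⟩)
    · have : (h : ℝ) ≤ ((h + ∑ c ∈ C₁, (Hc c + 1) : ℕ) : ℝ) := by
        exact_mod_cast Nat.le_add_right _ _
      exact ⟨a1, by linarith, by linarith, a4⟩
    · have h0 : (0 : ℝ) ≤ ((h + ∑ c ∈ C₁, (Hc c + 1) : ℕ) : ℝ) := by positivity
      rcases lt_or_ge x.1 1 with hx | hx
      · obtain ⟨b1, b2⟩ := a3 hx
        exact ⟨a1, a2, by nlinarith, by nlinarith⟩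
      · obtain ⟨b1, b2⟩ := a4 hx
        exact ⟨a1, a2, b1, by linarith⟩

/-- A drawing of a vertex all of whose children are small. -/
lemma stage_none {s b W : ℕ} (hs : 1 ≤ s) (hb : 1 ≤ b) (hsb : s ≤ 2 ^ b) (u : V)
    (hu : ∀ c ∈ T.ch u, T.sz c < s) (hW : 2 * b * s ^ 2 ≤ W) :
    ∃ H : ℕ, s * H ≤ 34 * b * T.sz u + b * s ∧ T.UDraw u W H := by
  classical
  obtain ⟨Y, h1, h2⟩ := star_stack hs hb hsb (T.ch u) ∅ hu (fun _ => 0) hW (by simp)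
  rw [Finset.union_empty] at h2
  obtain ⟨f, hf, hf0, hfp⟩ := h2.compose ⟨0, 0, by simp⟩ (by simp)
  refine ⟨Y, ?_, f, hf, hf0, fun x hx => ?_⟩
  · have := sz_eq (T := T) u
    have h3 : 34 * b * ∑ c ∈ T.ch u, T.sz c ≤ 34 * b * T.sz u :=
      Nat.mul_le_mul_left _ (by omega)
    simp at h1
    omega
  · have hY : (0 : ℝ) ≤ Y := by positivity
    have hW' : (0 : ℝ) ≤ W := by positivity
    rcases hfp hx with rfl | ⟨a1, a2, a3, a4⟩
    · simp [hW']
    · exact ⟨a1.le, a2, a3, a4.le⟩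

/-- A drawing of a vertex `u` with a distinguished child `h`, which goes to the bottom of the
column of `u`. -/
lemma stage_some {s b W : ℕ} (hs : 1 ≤ s) (hb : 1 ≤ b) (hsb : s ≤ 2 ^ b) (u h : V)
    (C₀ C₁ : Finset V) [DecidableEq V] (hu : T.ch u = C₀ ∪ C₁ ∪ {h})
    (hC₀ : ∀ c ∈ C₀, T.sz c < s) (Hc : V → ℕ) (hW : 2 * b * s ^ 2 ≤ W)
    (hC₁ : ∀ c ∈ C₁, ∃ W', W' + 1 ≤ W ∧ T.UDraw c W' (Hc c)) (hh : T.UDraw h W (Hc h)) :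
    ∃ H : ℕ, s * H ≤ 34 * b * (∑ c ∈ C₀, T.sz c) + b * s + ∑ c ∈ C₁, (s * Hc c + s)
        + (s * Hc h + s) ∧ T.UDraw u W H := by
  obtain ⟨Y, h1, h2⟩ := star_stack hs hb hsb C₀ C₁ hC₀ Hc hW hC₁
  obtain ⟨f, hf, hf0, hfp⟩ := hh.at 0 (-((Y + 1 : ℕ) : ℤ))
  push_cast at hf0 hfp
  have hY : (0 : ℝ) ≤ Y := by positivity
  have hW' : (0 : ℝ) ≤ W := by positivity
  have hH' : (0 : ℝ) ≤ Hc h := by positivity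
  have h3 : T.Fan RUp (0, 0) {h} {x | 0 ≤ x.1 ∧ x.1 ≤ W ∧ -((Y : ℝ) + 1 + Hc h) ≤ x.2 ∧ x.2 < 0 ∧
      (-((Y : ℝ) + 1) < x.2 → x.1 = 0)} := by
    apply fan_single hf
    · simp only [hf0, RUp]
      linarith
    · rintro x ⟨t, t0, t1, -, e2⟩ hx
      rw [hf0] at e2
      simp only at e2
      have := (hfp x hx).2.2.2
      nlinarith
    · rintro x ⟨t, t0, t1, e1, e2⟩
      rw [hf0] at e1 e2
      simp only at e1 e2
      have e1' : x.1 = 0 := by rw [e1]; ring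
      exact ⟨by linarith, by linarith, by nlinarith, by nlinarith, fun _ => e1'⟩
    · intro x hx
      obtain ⟨a1, a2, a3, a4⟩ := hfp x hx
      exact ⟨by linarith, by linarith, by linarith, by linarith, fun h => by linarith⟩
  have h4 := h2.union h3 (by
    rintro x ⟨a1, a2, a3, a4⟩ ⟨b1, b2, b3, b4, b5⟩
    have := b5 (by linarith)
    linarith)
  obtain ⟨F, hF, hF0, hFp⟩ := Fan.compose (v := u) (p := (0, 0)) (by
    rw [hu]; convert h4) ⟨0, 0, by simp⟩ (by simp)
  refine ⟨Y + 1 + Hc h, ?_, F, hF, hF0, fun x hx => ?_⟩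
  · rw [mul_add, mul_add, mul_one]
    omega
  · push_cast
    rcases hFp hx with rfl | ⟨a1, a2, a3, a4⟩ | ⟨b1, b2, b3, b4, b5⟩
    · refine ⟨le_rfl, hW', ?_, le_rfl⟩
      simp only; linarith
    · exact ⟨a1.le, a2, by linarith, a4.le⟩
    · exact ⟨b1, b2, by linarith, b4.le⟩

end

end RT

/-! ### Drawing the upper part of a heavy path -/

namespace RT

/-- `u` lies below `v`, and all subtrees that branch off the path from `v` to `u` above `u` have
flat drawings of height `H`. -/
inductive Chain {V : Type} [Fintype V] [DecidableEq V] (T : RT V) (H : ℕ) (u : V) : V → Prop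
  | base : Chain T H u u
  | step {v h : V} (hh : h ∈ T.ch v) (hl : ∀ c ∈ (T.ch v).erase h, T.BDraw c H)
      (hc : Chain T H u h) : Chain T H u v

section
variable {V : Type} [Fintype V] [DecidableEq V] {T : RT V}

lemma Chain.sz_le {H : ℕ} {u v : V} (h : T.Chain H u v) : T.sz u ≤ T.sz v := by
  induction h with
  | base => exact le_rfl
  | step hh _ _ ih => exact ih.trans (sz_ch_lt hh).le

/-- The path from `v` to `u` is drawn on row `0` from right to left, in the columns up to
`g = sz v - sz u`, with the subtrees branching off below; `u` is in column `0` below all of this.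
The last two conjuncts say that `v` can be joined to the point `(g + 1, 0)`, as used to prolong the
path, and to the point `(0, 1)`, as used to finish it. -/
def Tail {V : Type} [Fintype V] (T : RT V) (v : V) (g : ℝ) (K W Hu : ℝ) : Prop :=
  ∃ f, T.Good RUp f v ∧
    (∀ x ∈ T.piece f v, 0 ≤ x.1 ∧ x.1 ≤ W ∧ -(K + Hu) ≤ x.2 ∧ x.2 ≤ 0 ∧ (-K < x.2 → x.1 ≤ g) ∧
      (x.2 = 0 → x.1 ≤ (f v).1)) ∧
    (∀ x ∈ oe (g + 1, 0) (f v), x ∉ T.piece f v ∧ 0 ≤ x.1 ∧ x.1 < g + 1 ∧ -K < x.2 ∧ x.2 ≤ 0) ∧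
    (∀ x ∈ oe (0, 1) (f v), x ∉ T.piece f v ∧ 0 ≤ x.1 ∧ x.1 ≤ g ∧ x.1 ≤ (1 - x.2) * g ∧
      -K < x.2 ∧ x.2 < 1)

lemma Chain.tail {H W Hu : ℕ} {u v : V} (h : T.Chain H u v) (hu : T.UDraw u W Hu)
    (hW : (T.sz v : ℝ) - T.sz u ≤ W) : T.Tail v (T.sz v - T.sz u) (H + 2) W Hu := by
  have hH : (0 : ℝ) ≤ H := by positivity
  have hW0 : (0 : ℝ) ≤ W := by positivity
  have hHu : (0 : ℝ) ≤ Hu := by positivity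
  induction h with
  | base =>
    obtain ⟨f, hf, hf0, hfp⟩ := hu.at 0 (-((H + 2 : ℕ) : ℤ))
    push_cast at hf0 hfp
    rw [sub_self]
    refine ⟨f, hf, ?_, ?_, ?_⟩
    · intro x hx
      obtain ⟨a1, a2, a3, a4⟩ := hfp x hx
      exact ⟨a1, by linarith, by linarith, by linarith, fun h => by linarith,
        fun h => by linarith⟩
    · rintro x ⟨t, t0, t1, e1, e2⟩
      rw [hf0] at e1 e2
      simp only at e1 e2
      refine ⟨fun hx => ?_, by linarith, by linarith, by nlinarith, by nlinarith⟩
      have := (hfp x hx).2.2.2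
      nlinarith
    · rintro x ⟨t, t0, t1, e1, e2⟩
      rw [hf0] at e1 e2
      simp only at e1 e2
      refine ⟨fun hx => ?_, by linarith, by linarith, by linarith, by nlinarith, by nlinarith⟩
      have := (hfp x hx).2.2.2
      nlinarith
  | @step v h hh hl hc ih =>
    have hsz := sz_split hh
    set N := ∑ c ∈ (T.ch v).erase h, T.sz c with hN
    have hszr : (T.sz v : ℝ) = 1 + N + T.sz h := by exact_mod_cast hsz
    have hNr : (0 : ℝ) ≤ N := by positivity
    obtain ⟨f, hf, hfp, hQ1, -⟩ := ih (by linarith)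
    have hle := hc.sz_le
    have hg' : (T.sz h : ℝ) - T.sz u = ((T.sz h - T.sz u : ℕ) : ℝ) := (Nat.cast_sub hle).symm
    have hgv : (T.sz v : ℝ) - T.sz u = (T.sz h - T.sz u) + 1 + N := by rw [hszr]; ring
    rw [hgv] at hW ⊢
    rw [hg'] at hfp hQ1 hW ⊢
    set g := T.sz h - T.sz u with hg
    have hg0 : (0 : ℝ) ≤ g := by positivity
    have hrow := (row (T := T) ((g + 1 : ℕ) : ℤ) 0 ((g + 1 : ℕ) : ℤ) le_rfl _ hl).weaken RB_RUp
    rw [← hN] at hrow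
    push_cast at hrow
    have hr2 : T.Fan RUp ((g : ℝ) + 1, 0) ((T.ch v).erase h)
        {x | (g : ℝ) + 1 ≤ x.1 ∧ x.1 ≤ g + 1 + N ∧ -((H : ℝ) + 2) < x.2 ∧ x.2 < 0} := by
      refine hrow.subset fun x hx => ?_
      have hx' := rowReg_mono (le_refl ((g : ℝ) + 1))
        (show (g : ℝ) + 1 + N - 1 ≤ g + 1 + N by linarith) hx
      have hb := rowReg_bounds (p := ((g : ℝ) + 1, 0)) le_rfl
        (Or.inl (by linarith)) hx'
      have h1 := hx'.1
      have h2 := hx'.2.1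
      simp only at h1 h2 hb
      exact ⟨hb.1, hb.2.1, by linarith, h1⟩
    have hs : T.Fan RUp ((g : ℝ) + 1, 0) {h}
        {x | 0 ≤ x.1 ∧ x.1 ≤ W ∧ -((H : ℝ) + 2 + Hu) ≤ x.2 ∧ x.2 ≤ 0 ∧
          (-((H : ℝ) + 2) < x.2 → x.1 < g + 1)} := by
      apply fan_single hf
      · exact (hfp _ (root_mem_piece f h)).2.2.2.1
      · exact fun x hx => (hQ1 x hx).1
      · intro x hx
        obtain ⟨-, a1, a2, a3, a4⟩ := hQ1 x hx
        exact ⟨a1, by linarith, by linarith, a4, fun _ => a2⟩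
      · intro x hx
        obtain ⟨a1, a2, a3, a4, a5, -⟩ := hfp x hx
        exact ⟨a1, a2, a3, a4, fun h => by linarith [a5 h]⟩
    have hU := hr2.union hs (by
      rintro x ⟨a1, a2, a3, a4⟩ ⟨-, -, -, -, b⟩
      linarith [b a3])
    obtain ⟨F, hF, hF0, hFp⟩ := Fan.compose (v := v) (p := ((g : ℝ) + 1, 0)) (by
      rw [← Finset.insert_erase hh, Finset.insert_eq, Finset.union_comm]
      convert hU) ⟨((g + 1 : ℕ) : ℤ), 0, by push_cast; rfl⟩ (by
        rintro (⟨-, -, -, a⟩ | ⟨-, -, -, -, a⟩)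
        · simp at a
        · have := a (by simp only; linarith)
          simp at this)
    have hFp' : ∀ x ∈ T.piece F v, 0 ≤ x.1 ∧ x.1 ≤ W ∧ -((H : ℝ) + 2 + Hu) ≤ x.2 ∧ x.2 ≤ 0 ∧
        (-((H : ℝ) + 2) < x.2 → x.1 ≤ g + 1 + N) ∧ (x.2 = 0 → x.1 ≤ g + 1) := by
      intro x hx
      rcases hFp hx with rfl | ⟨a1, a2, a3, a4⟩ | ⟨a1, a2, a3, a4, a5⟩
      · simp only
        exact ⟨by linarith, by linarith, by linarith, le_rfl, fun _ => by linarith,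
          fun _ => le_rfl⟩
      · exact ⟨by linarith, by linarith, by linarith, a4.le, fun _ => a2, fun h => by linarith⟩
      · exact ⟨a1, a2, a3, a4, fun h => by linarith [a5 h],
          fun h => by linarith [a5 (by linarith)]⟩
    refine ⟨F, hF, by rw [hF0]; exact hFp', ?_, ?_⟩
    · rintro x ⟨t, t0, t1, e1, e2⟩
      rw [hF0] at e1 e2
      simp only at e1 e2
      have e2' : x.2 = 0 := by rw [e2]; ring
      have h1 : x.1 < g + 1 + N + 1 := by nlinarith
      have h2 : (g : ℝ) + 1 < x.1 := by nlinarith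
      exact ⟨fun hx => by linarith [(hFp' x hx).2.2.2.2.2 e2'], by linarith, h1, by linarith,
        e2'.le⟩
    · rintro x ⟨t, t0, t1, e1, e2⟩
      rw [hF0] at e1 e2
      simp only at e1 e2
      have e2' : x.2 = 1 - t := by rw [e2]; ring
      have e1' : x.1 = t * (g + 1) := by rw [e1]; ring
      refine ⟨fun hx => ?_, ?_, ?_, ?_, by linarith, by linarith⟩
      · linarith [(hFp' x hx).2.2.2.1]
      · rw [e1']; positivity
      · rw [e1']; nlinarith
      · rw [e1', e2']; nlinarith

/-- A path with light branches of small total size costs only `O(H)` additional rows. -/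
lemma Chain.group {H W Hu : ℕ} {u v h : V} (hh : h ∈ T.ch v)
    (hl : ∀ c ∈ (T.ch v).erase h, T.BDraw c H) (hc : T.Chain H u h) (hu : T.UDraw u W Hu)
    (hW : T.sz v ≤ T.sz u + W) : T.UDraw v W (Hu + H + 3) := by
  have hH : (0 : ℝ) ≤ H := by positivity
  have hHu : (0 : ℝ) ≤ Hu := by positivity
  have hW0 : (0 : ℝ) ≤ W := by positivity
  have hWr : (T.sz v : ℝ) ≤ T.sz u + W := by exact_mod_cast hW
  have hsz := sz_split hh
  set N := ∑ c ∈ (T.ch v).erase h, T.sz c with hN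
  have hszr : (T.sz v : ℝ) = 1 + N + T.sz h := by exact_mod_cast hsz
  have hNr : (0 : ℝ) ≤ N := by positivity
  obtain ⟨f, hf, hfp, -, hQ2⟩ := hc.tail hu (by linarith)
  have hle := hc.sz_le
  have hg' : (T.sz h : ℝ) - T.sz u = ((T.sz h - T.sz u : ℕ) : ℝ) := (Nat.cast_sub hle).symm
  have hgW : (T.sz h : ℝ) - T.sz u + 1 + N ≤ W := by linarith
  rw [hg'] at hfp hQ2 hgW
  set g := T.sz h - T.sz u with hg
  have hg0 : (0 : ℝ) ≤ g := by positivity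
  have hrow := (row (T := T) 0 1 ((g + 1 : ℕ) : ℤ) (by positivity) _ hl).weaken RB_RUp
  rw [← hN] at hrow
  push_cast at hrow
  have hs : T.Fan RUp ((0 : ℝ), 1) {h}
      {x | 0 ≤ x.1 ∧ x.1 ≤ W ∧ -((H : ℝ) + 2 + Hu) ≤ x.2 ∧ x.2 < 1 ∧
        (-((H : ℝ) + 2) < x.2 → x.1 ≤ g) ∧ (0 < x.2 → x.1 ≤ (1 - x.2) * g)} := by
    apply fan_single hf
    · have := (hfp _ (root_mem_piece f h)).2.2.2.1
      simp only [RUp]; linarith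
    · exact fun x hx => (hQ2 x hx).1
    · intro x hx
      obtain ⟨-, a1, a2, a3, a4, a5⟩ := hQ2 x hx
      exact ⟨a1, by linarith, by linarith, a5, fun _ => a2, fun _ => a3⟩
    · intro x hx
      obtain ⟨a1, a2, a3, a4, a5, -⟩ := hfp x hx
      exact ⟨a1, a2, a3, by linarith, a5, fun h => by linarith⟩
  have hU := hrow.union hs (by
    rintro x ⟨a1, a2, a3, a4⟩ ⟨b1, b2, b3, b4, b5, b6⟩
    simp only at a1 a2 a3 a4
    rcases le_or_gt x.2 0 with h0 | h0
    · linarith [(a3 (by linarith)).1, b5 (by linarith)]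
    · have := (a4 (by linarith)).1
      have := b6 h0
      nlinarith)
  obtain ⟨F, hF, hF0, hFp⟩ := Fan.compose (v := v) (p := ((0 : ℝ), 1)) (by
    rw [← Finset.insert_erase hh, Finset.insert_eq, Finset.union_comm]
    convert hU) ⟨0, 1, by simp⟩ (by
      rintro (⟨a, -⟩ | ⟨-, -, -, a, -⟩) <;> simp at a)
  obtain ⟨F', hF', hF0', hFp'⟩ := hF.shift RUp_shift 0 (-1)
  refine ⟨F', hF', ?_, fun x hx => ?_⟩
  · rw [hF0', hF0]; simp
  · obtain ⟨y, hy, e1, e2⟩ := hFp' x hx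
    push_cast at e1 e2 ⊢
    rw [e1, e2]
    have hy' : 0 ≤ y.1 ∧ y.1 ≤ W ∧ -((H : ℝ) + 2 + Hu) ≤ y.2 ∧ y.2 ≤ 1 := by
      rcases hFp hy with rfl | hy | ⟨a1, a2, a3, a4, -⟩
      · simp only
        exact ⟨le_rfl, hW0, by linarith, le_rfl⟩
      · have hx' := rowReg_mono (le_refl ((g : ℝ) + 1))
          (show (g : ℝ) + 1 + N - 1 ≤ g + 1 + N by linarith) hy
        have hb := rowReg_bounds (p := ((0 : ℝ), 1)) (by simp only; linarith)
          (Or.inl (by linarith)) hx'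
        have h1 := hx'.1
        have h2 := hx'.2.1
        simp only at h1 h2 hb
        exact ⟨hb.1, by linarith, by linarith, h1.le⟩
      · exact ⟨a1, a2, a3, a4.le⟩
    obtain ⟨a1, a2, a3, a4⟩ := hy'
    refine ⟨?_, ?_, ?_, ?_⟩ <;> linarith

end

end RT

/-! ### The recursive drawing -/

namespace RT

section
variable {V : Type} [Fintype V] [DecidableEq V] {T : RT V}

lemma Chain.udraw {H W Hu : ℕ} {u v : V} (hc : T.Chain H u v) (hu : T.UDraw u W Hu)
    (hW : T.sz v ≤ T.sz u + W) : T.UDraw v W (Hu + H + 3) := by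
  cases hc with
  | base => exact hu.mono le_rfl (by omega)
  | step hh hl hc => exact hc.group hh hl hu hW

/-- Following the heavy path from `v`, one stops at the last vertex `u` for which the total size of
what branches off above `u` does not exceed `R`. -/
lemma exists_chain {b s : ℕ} (hsb : s ≤ 2 ^ b) (v : V) (R : ℕ) (hR : R ≤ s ^ 2)
    (hv : R < T.sz v) :
    ∃ u, T.Chain (2 * b) u v ∧ T.sz v ≤ T.sz u + R ∧
      (T.sz u ≤ 1 ∨ ∃ h ∈ T.ch u, (∀ c ∈ T.ch u, T.sz c ≤ T.sz h) ∧
        (∀ c ∈ T.ch u, c ≠ h → 2 * T.sz c < T.sz u) ∧ T.sz h + R < T.sz v) := by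
  generalize hm : T.sz v = m
  induction m using Nat.strong_induction_on generalizing v R with
  | _ m ih =>
  rcases Nat.lt_or_ge 1 m with h1 | h1
  · obtain ⟨h, hh, hheavy, hlight⟩ := exists_heavy (T := T) (v := v) (by omega)
    rcases Nat.lt_or_ge (T.sz h + R) m with h2 | h2
    · exact ⟨v, .base, by omega, Or.inr ⟨h, hh, hheavy, hlight, h2⟩⟩
    · have hlt : T.sz h < T.sz v := sz_ch_lt hh
      obtain ⟨u, hu1, hu2, hu3⟩ := ih (T.sz h) (by omega) h (R - (m - T.sz h)) (by omega)
        (by omega) rfl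
      refine ⟨u, .step hh ?_ hu1, by omega, ?_⟩
      · intro c hc
        refine (bdraw c).mono ?_
        have hsz := sz_split hh
        have h3 : T.sz c ≤ ∑ c ∈ (T.ch v).erase h, T.sz c :=
          Finset.single_le_sum (fun _ _ => Nat.zero_le _) hc
        have h4 : T.sz c ≤ 2 ^ (2 * b) := by
          calc T.sz c ≤ s ^ 2 := by omega
            _ ≤ (2 ^ b) ^ 2 := Nat.pow_le_pow_left hsb 2
            _ = 2 ^ (2 * b) := by rw [← pow_mul, mul_comm]
        have := Nat.log_mono_right (b := 2) h4
        rwa [Nat.log_pow (by norm_num)] at this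
      · rcases hu3 with h | ⟨h', a1, a2, a3, a4⟩
        · exact Or.inl h
        · exact Or.inr ⟨h', a1, a2, a3, by omega⟩
  · exact ⟨v, .base, by omega, Or.inl (by omega)⟩

/-- The height bound.  The slack `8 * b` on the left hand side pays for the additive `O(b)` rows of
a step whenever the vertex reached by the heavy path has two children with large subtrees.
Otherwise more than `s ^ 2` vertices are not in the subtree of the single large child, if there is
one, and these pay for the additional rows. -/
lemma udraw {b s : ℕ} (hs : 1 ≤ s) (hb : 1 ≤ b) (hsb : s ≤ 2 ^ b) (v : V) (hv : s ≤ T.sz v) :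
    ∃ H, s * (H + 8 * b) ≤ 48 * b * T.sz v ∧
      T.UDraw v (3 * b * s ^ 2 + Nat.log 2 (T.sz v)) H := by
  generalize hm : T.sz v = m
  induction m using Nat.strong_induction_on generalizing v with
  | _ m ih =>
  have hbs : s ≤ b * s := Nat.le_mul_of_pos_left _ hb
  have hS : s ≤ s ^ 2 := by nlinarith
  have hbS : s ^ 2 ≤ b * s ^ 2 := Nat.le_mul_of_pos_left _ hb
  have hbm : b * s ≤ b * m := Nat.mul_le_mul_left _ (by omega)
  rcases Nat.lt_or_ge (s ^ 2) m with h1 | h1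
  · obtain ⟨u, hc, hu1, hu2⟩ := exists_chain (T := T) hsb v (s ^ 2) le_rfl (by omega)
    have hum : T.sz u ≤ m := hm ▸ hc.sz_le
    have hbum : b * T.sz u ≤ b * m := Nat.mul_le_mul_left _ hum
    set W := 3 * b * s ^ 2 + Nat.log 2 m with hW
    have hW1 : 2 * b * s ^ 2 ≤ W := by nlinarith
    have hW2 : s ^ 2 ≤ W := by nlinarith
    have hnone : (∀ c ∈ T.ch u, T.sz c < s) →
        ∃ H, s * (H + 8 * b) ≤ 48 * b * m ∧ T.UDraw v W H := by
      intro hall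
      obtain ⟨H, hH1, hH2⟩ := stage_none hs hb hsb u hall hW1
      refine ⟨_, ?_, hc.udraw hH2 (by omega)⟩
      nlinarith
    rcases hu2 with hu2 | ⟨h, hh, hheavy, hlight, hbig⟩
    · apply hnone
      rw [ch_eq_empty hu2]
      simp
    rcases Nat.lt_or_ge (T.sz h) s with h2 | h2
    · exact hnone fun c hc => (hheavy c hc).trans_lt h2
    have hsz := sz_split hh
    set C₀ := ((T.ch u).erase h).filter fun c => T.sz c < s with hC₀
    set C₁ := ((T.ch u).erase h).filter fun c => ¬ T.sz c < s with hC₁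
    have hsum : ∑ c ∈ C₀, T.sz c + ∑ c ∈ C₁, T.sz c = ∑ c ∈ (T.ch u).erase h, T.sz c :=
      Finset.sum_filter_add_sum_filter_not _ _ _
    have hex : ∀ c, ∃ Hc, c ∈ T.ch u → s ≤ T.sz c → s * (Hc + 8 * b) ≤ 48 * b * T.sz c ∧
        T.UDraw c (3 * b * s ^ 2 + Nat.log 2 (T.sz c)) Hc := by
      intro c
      by_cases hc : c ∈ T.ch u ∧ s ≤ T.sz c
      · obtain ⟨H, hH⟩ := ih (T.sz c) (lt_of_lt_of_le (sz_ch_lt hc.1) hum) c hc.2 rfl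
        exact ⟨H, fun _ _ => hH⟩
      · exact ⟨0, fun h h' => absurd ⟨h, h'⟩ hc⟩
    choose Hc hHc using hex
    have hmem : ∀ c ∈ C₁, c ∈ T.ch u ∧ c ≠ h ∧ s ≤ T.sz c := by
      intro c hc
      rw [hC₁, Finset.mem_filter, Finset.mem_erase, not_lt] at hc
      exact ⟨hc.1.2, hc.1.1, hc.2⟩
    obtain ⟨Hh1, Hh2⟩ := hHc h hh h2
    obtain ⟨H, hH1, hH2⟩ := stage_some (W := W) hs hb hsb u h C₀ C₁ (by
        rw [hC₀, hC₁, Finset.filter_union_filter_not_eq, Finset.union_comm,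
          ← Finset.insert_eq, Finset.insert_erase hh])
      (fun c hc => (Finset.mem_filter.1 hc).2) Hc hW1 (by
        intro c hc
        obtain ⟨c1, c2, c3⟩ := hmem c hc
        refine ⟨_, ?_, (hHc c c1 c3).2⟩
        have h3 := hlight c c1 c2
        have h4 : Nat.log 2 (T.sz c * 2) ≤ Nat.log 2 m := Nat.log_mono_right (by omega)
        rw [Nat.log_mul_base (by norm_num) (sz_pos c).ne'] at h4
        omega)
      (Hh2.mono (by
        have h3 := sz_ch_lt hh
        have h4 : Nat.log 2 (T.sz h) ≤ Nat.log 2 m := Nat.log_mono_right (by omega)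
        omega) le_rfl)
    refine ⟨_, ?_, hc.udraw hH2 (by omega)⟩
    have hsC : ∑ c ∈ C₁, (s * Hc c + s) + C₁.card * (7 * (b * s))
        ≤ 48 * b * ∑ c ∈ C₁, T.sz c := by
      rw [← smul_eq_mul, ← Finset.sum_const, ← Finset.sum_add_distrib, Finset.mul_sum]
      refine Finset.sum_le_sum fun c hc => ?_
      obtain ⟨c1, c2, c3⟩ := hmem c hc
      have h3 := (hHc c c1 c3).1
      have h4 : s * (Hc c + 8 * b) = s * Hc c + 8 * (b * s) := by ring
      omega
    set N₀ := ∑ c ∈ C₀, T.sz c with hN₀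
    set N₁ := ∑ c ∈ C₁, T.sz c with hN₁
    have e1 : s * (H + 2 * b + 3 + 8 * b) = s * H + 10 * (b * s) + 3 * s := by ring
    have e2 : s * (Hc h + 8 * b) = s * Hc h + 8 * (b * s) := by ring
    rw [e1]
    rw [e2] at Hh1
    rcases Nat.eq_zero_or_pos C₁.card with h3 | h3
    · have h4 : C₁ = ∅ := Finset.card_eq_zero.1 h3
      rw [h4] at hN₁ hH1
      simp only [Finset.sum_empty] at hN₁ hH1
      have h5 : b * (T.sz h + s) ≤ b * m := Nat.mul_le_mul_left _ (by omega)
      have h6 : b * (T.sz h + N₀) ≤ b * m := Nat.mul_le_mul_left _ (by omega)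
      rw [mul_add] at h5 h6
      rw [mul_assoc] at hH1 Hh1 ⊢
      omega
    · have h5 : 7 * (b * s) ≤ C₁.card * (7 * (b * s)) := Nat.le_mul_of_pos_left _ h3
      have h6 : b * (T.sz h + N₀ + N₁) ≤ b * m := Nat.mul_le_mul_left _ (by omega)
      rw [mul_add, mul_add] at h6
      rw [mul_assoc] at hH1 Hh1 hsC ⊢
      omega
  · have hd := (bdraw v).mono (H' := 2 * b) (by
      have h4 : T.sz v ≤ 2 ^ (2 * b) := by
        calc T.sz v ≤ s ^ 2 := by omega
          _ ≤ (2 ^ b) ^ 2 := Nat.pow_le_pow_left hsb 2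
          _ = 2 ^ (2 * b) := by rw [← pow_mul, mul_comm]
      have := Nat.log_mono_right (b := 2) h4
      rwa [Nat.log_pow (by norm_num)] at this)
    refine ⟨2 * b, ?_, hd.udraw.mono ?_ le_rfl⟩
    · have : s * (2 * b + 8 * b) = 10 * (b * s) := by ring
      rw [this, mul_assoc]
      omega
    · nlinarith

end

end RT

/-! ### From graphs to rooted trees and back -/

lemma segment_eq_oe (p q : ℝ × ℝ) {x : ℝ × ℝ} (hx : x ∈ segment ℝ p q) :
    x = p ∨ x = q ∨ x ∈ oe p q := by
  rw [segment_eq_image'] at hx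
  obtain ⟨t, ⟨t0, t1⟩, rfl⟩ := hx
  rcases t0.eq_or_lt with h | h
  · left; rw [← h]; simp
  rcases t1.eq_or_lt with h' | h'
  · right; left; rw [h']; simp
  · right; right
    exact ⟨t, h, h', by simp, by simp⟩

/-- The rooted tree of a tree graph: the parent of `v` is its unique neighbour closer to `r`. -/
lemma exists_RT {V : Type} (G : SimpleGraph V) (hG : G.IsTree) (r : V) :
    ∃ T : RT V, T.root = r ∧ ∀ u v, G.Adj u v →
      ((v ≠ r ∧ T.par v = u) ∨ (u ≠ r ∧ T.par u = v)) ∧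
      (G.dist r u + 1 = G.dist r v → v ≠ r ∧ T.par v = u) := by
  classical
  have hex : ∀ v, ∃ u, v ≠ r → G.Adj v u ∧ G.dist r u + 1 = G.dist r v := by
    intro v
    by_cases hv : v = r
    · exact ⟨v, fun h => absurd hv h⟩
    · obtain ⟨p, hp⟩ := hG.connected.exists_walk_length_eq_dist v r
      cases p with
      | nil => exact absurd rfl hv
      | @cons _ u _ h p =>
        refine ⟨u, fun _ => ⟨h, ?_⟩⟩
        rw [SimpleGraph.Walk.length_cons] at hp
        have h1 := SimpleGraph.dist_le p
        rw [SimpleGraph.dist_comm (u := v)] at hp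
        rw [SimpleGraph.dist_comm (u := u)] at h1
        rcases hG.dist_eq_dist_add_one_of_adj r h with h2 | h2 <;> omega
  have huniq : ∀ v u u', G.Adj v u → G.Adj v u' → G.dist r u + 1 = G.dist r v →
      G.dist r u' + 1 = G.dist r v → u = u' := by
    intro v u u' h h' hd hd'
    obtain ⟨p, hp⟩ := hG.connected.exists_walk_length_eq_dist u r
    obtain ⟨p', hp'⟩ := hG.connected.exists_walk_length_eq_dist u' r
    have e1 : (SimpleGraph.Walk.cons h p).IsPath := by
      apply SimpleGraph.Walk.isPath_of_length_eq_dist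
      rw [SimpleGraph.Walk.length_cons, hp, SimpleGraph.dist_comm, hd, SimpleGraph.dist_comm]
    have e2 : (SimpleGraph.Walk.cons h' p').IsPath := by
      apply SimpleGraph.Walk.isPath_of_length_eq_dist
      rw [SimpleGraph.Walk.length_cons, hp', SimpleGraph.dist_comm, hd', SimpleGraph.dist_comm]
    have e3 := (hG.existsUnique_path v r).unique e1 e2
    have e4 := congrArg SimpleGraph.Walk.snd e3
    simpa using e4
  choose par hpar using hex
  let T : RT V :=
    { par := fun v => if v = r then r else par v
      root := r
      rk := G.dist r
      par_root := by simp
      rk_par := fun v hv => by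
        simp only [hv, if_false]
        exact (hpar v hv).2 }
  have key : ∀ u v, G.Adj u v → G.dist r u + 1 = G.dist r v → v ≠ r ∧ T.par v = u := by
    intro u v h hd
    have hv : v ≠ r := by
      rintro rfl
      rw [SimpleGraph.dist_self] at hd
      omega
    refine ⟨hv, ?_⟩
    simp only [T, hv, if_false]
    exact huniq v _ _ (hpar v hv).1 h.symm (hpar v hv).2 hd
  refine ⟨T, rfl, fun u v h => ⟨?_, key u v h⟩⟩
  rcases hG.dist_eq_dist_add_one_of_adj r h with h2 | h2
  · exact Or.inr (key v u h.symm h2.symm)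
  · exact Or.inl (key u v h h2.symm)

/-- Disjointness of the cells is planarity. -/
lemma isStraightLineDrawing_of_good {V : Type} [Fintype V] {G : SimpleGraph V} {T : RT V}
    {R : ℝ × ℝ → ℝ × ℝ → Prop} {f : V → ℝ × ℝ} (hf : T.Good R f T.root)
    (hT : ∀ u v, G.Adj u v → (v ≠ T.root ∧ T.par v = u) ∨ (u ≠ T.root ∧ T.par u = v)) :
    IsStraightLineDrawing G f := by
  have hdisj : ∀ w w', ∀ x ∈ T.cell f T.root w, x ∈ T.cell f T.root w' → w = w' := by
    intro w w' x hx hx'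
    by_contra hne
    exact hf.disj w (by rw [RT.D_root]; simp) w' (by rw [RT.D_root]; simp) hne x hx hx'
  have hself : ∀ w, f w ∈ T.cell f T.root w := by
    intro w
    unfold RT.cell
    split_ifs with h
    · rw [h]; rfl
    · exact Or.inl rfl
  have hinj : Function.Injective f := fun w w' h => hdisj w w' (f w) (hself w) (h ▸ hself w')
  have hseg : ∀ v, v ≠ T.root → ∀ x ∈ segment ℝ (f (T.par v)) (f v),
      x = f (T.par v) ∨ x ∈ T.cell f T.root v := by
    intro v hv x hx
    rcases segment_eq_oe _ _ hx with h | h | h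
    · exact Or.inl h
    · exact Or.inr (h ▸ hself v)
    · right
      unfold RT.cell
      rw [if_neg hv]
      exact Or.inr h
  refine ⟨hinj, ?_, ?_⟩
  · have main : ∀ v w, v ≠ T.root → w ≠ T.par v → w ≠ v →
        f w ∉ segment ℝ (f (T.par v)) (f v) := by
      intro v w hv h1 h2 hx
      rcases hseg v hv _ hx with h | h
      · exact h1 (hinj h)
      · exact h2 (hdisj _ _ _ (hself w) h)
    intro u v w h hu hv
    rcases hT u v h with ⟨hr, rfl⟩ | ⟨hr, rfl⟩
    · exact main v w hr hu hv
    · rw [segment_symm]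
      exact main u w hr hv hu
  · have main : ∀ v v', v ≠ T.root → v' ≠ T.root → v ≠ v' →
        ∀ x ∈ segment ℝ (f (T.par v)) (f v), x ∈ segment ℝ (f (T.par v')) (f v') →
        ∃ w, (w = T.par v ∨ w = v) ∧ (w = T.par v' ∨ w = v') ∧ f w = x := by
      intro v v' hv hv' hne x hx hx'
      rcases hseg v hv _ hx with h | h <;> rcases hseg v' hv' _ hx' with h' | h'
      · exact ⟨T.par v, Or.inl rfl, Or.inl (hinj (h.symm.trans h')), h.symm⟩
      · exact ⟨T.par v, Or.inl rfl, Or.inr (hdisj _ _ x (h ▸ hself _) h'), h.symm⟩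
      · exact ⟨T.par v', Or.inr (hdisj _ _ x (h' ▸ hself _) h), Or.inl rfl, h'.symm⟩
      · exact absurd (hdisj _ _ x h h') hne
    intro u v u' v' h h' hne
    ext x
    constructor
    · rintro ⟨hx, hx'⟩
      simp only [Set.mem_image, Set.mem_ofPred_eq, and_assoc]
      rcases hT u v h with ⟨hr, rfl⟩ | ⟨hr, rfl⟩ <;> rcases hT u' v' h' with ⟨hr', rfl⟩ | ⟨hr', rfl⟩
      · exact main v v' hr hr' (fun e => hne (by rw [e])) x hx hx'
      · rw [segment_symm] at hx'
        obtain ⟨w, a, b, c⟩ := main v u' hr hr' (fun e => hne (by rw [e, Sym2.eq_swap])) x hx hx'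
        exact ⟨w, a, b.symm, c⟩
      · rw [segment_symm] at hx
        obtain ⟨w, a, b, c⟩ := main u v' hr hr' (fun e => hne (by rw [e, Sym2.eq_swap])) x hx hx'
        exact ⟨w, a.symm, b, c⟩
      · rw [segment_symm] at hx hx'
        obtain ⟨w, a, b, c⟩ := main u u' hr hr' (fun e => hne (by rw [e])) x hx hx'
        exact ⟨w, a.symm, b.symm, c⟩
    · rintro ⟨w, ⟨h1, h2⟩, rfl⟩
      constructor
      · rcases h1 with rfl | rfl
        · exact left_mem_segment _ _ _
        · exact right_mem_segment _ _ _
      · rcases h2 with rfl | rfl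
        · exact left_mem_segment _ _ _
        · exact right_mem_segment _ _ _

/-- With `s ≈ √(log n)` and `b ≈ log s`, the area bound `192 * b² * s * n` has the required form. -/
lemma param_bounds (n : ℕ) (hn : 4 ≤ n) :
    ∃ s b : ℕ, 1 ≤ s ∧ 1 ≤ b ∧ s ≤ 2 ^ b ∧ s ≤ n ∧ Nat.log 2 n < s ^ 2 ∧
      (s : ℝ) ≤ 2 * Real.sqrt (Real.logb 2 n) ∧ (b : ℝ) ≤ 3 * Real.logb 2 (Real.logb 2 n) := by
  set l := Nat.log 2 n with hl
  set L := Real.logb 2 n with hL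
  have hn4 : (4 : ℝ) ≤ n := by exact_mod_cast hn
  have h24 : Real.logb 2 4 = 2 := by
    rw [show (4 : ℝ) = 2 ^ (2 : ℝ) by norm_num]
    exact Real.logb_rpow (by norm_num) (by norm_num)
  have hL2 : 2 ≤ L := by
    exact h24.ge.trans (Real.logb_le_logb_of_le (by norm_num) (by norm_num) hn4)
  have hlL : (l : ℝ) ≤ L := by simpa using Real.natLog_le_logb n 2
  have hLL : 1 ≤ Real.logb 2 L := by
    have : Real.logb 2 2 = 1 := Real.logb_self_eq_one (by norm_num)
    exact this.ge.trans (Real.logb_le_logb_of_le (by norm_num) (by norm_num) hL2)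
  have hsq1 : 1 ≤ Real.sqrt L := by
    rw [Real.one_le_sqrt]; linarith
  set s := Nat.sqrt l + 1 with hs
  have hs2 : (s : ℝ) ≤ 2 * Real.sqrt L := by
    have h1 : (Nat.sqrt l : ℝ) ≤ Real.sqrt l := Real.nat_sqrt_le_real_sqrt
    have h2 : Real.sqrt l ≤ Real.sqrt L := Real.sqrt_le_sqrt hlL
    rw [hs]
    push_cast
    linarith
  refine ⟨s, Nat.log 2 s + 1, by omega, by omega, (Nat.lt_pow_succ_log_self (by norm_num) _).le,
    ?_, ?_, hs2, ?_⟩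
  · have h1 : Nat.sqrt l ≤ l := Nat.sqrt_le_self _
    have h2 : l < n := Nat.log_lt_self _ (by omega)
    omega
  · rw [pow_two]
    exact Nat.lt_succ_sqrt l
  · have h1 : (Nat.log 2 s : ℝ) ≤ Real.logb 2 s := by simpa using Real.natLog_le_logb s 2
    have h2 : (s : ℝ) ≤ 2 * L := by
      have : Real.sqrt L ≤ L := by
        rw [Real.sqrt_le_left (by linarith)]; nlinarith
      linarith
    have hs0 : (0 : ℝ) < s := by rw [hs]; positivity
    have h3 : Real.logb 2 s ≤ Real.logb 2 (2 * L) :=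
      Real.logb_le_logb_of_le (by norm_num) hs0 h2
    rw [Real.logb_mul (by norm_num) (by linarith),
      Real.logb_self_eq_one (by norm_num)] at h3
    push_cast
    linarith


/-- Every tree of size `n ≥ 4` has a straight-line upward grid drawing of area
`O(n·√(log n)·(log log n)²)`. -/
theorem stmt7 : ∃ C : ℝ, 0 < C ∧
    ∀ (n : ℕ), 4 ≤ n →
    ∀ (V : Type) [Fintype V] (G : SimpleGraph V), G.IsTree → Fintype.card V = n →
    ∀ r : V,
    ∃ (W H : ℕ) (f : V → ℝ × ℝ), IsGridDrawing G f W H ∧ IsUpward G r f ∧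
      (W : ℝ) * H ≤
        C * n * Real.sqrt (Real.logb 2 n) * (Real.logb 2 (Real.logb 2 n)) ^ 2 := by
  classical
  refine ⟨3456, by norm_num, fun n hn V _ G hG hV r => ?_⟩
  obtain ⟨s, b, hs, hb, hsb, hsn, hls, hs2, hb2⟩ := param_bounds n hn
  obtain ⟨T, rfl, hT⟩ := exists_RT G hG r
  have hsz : T.sz T.root = n := by
    rw [RT.sz, RT.D_root, Finset.card_univ, hV]
  obtain ⟨H, hH, hd⟩ := RT.udraw hs hb hsb T.root (by rw [hsz]; exact hsn)
  rw [hsz] at hH hd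
  set W := 3 * b * s ^ 2 + Nat.log 2 n with hW
  obtain ⟨f, hf, -, hfp⟩ := hd.at 1 ((H + 1 : ℕ) : ℤ)
  push_cast at hfp
  have hD : ∀ v, v ∈ T.D T.root := fun v => by rw [RT.D_root]; simp
  refine ⟨W + 1, H + 1, f, ⟨isStraightLineDrawing_of_good hf fun u v h => (hT u v h).1, ?_⟩, ?_, ?_⟩
  · intro v
    obtain ⟨i, j, e⟩ := hf.int v (hD v)
    have hx : f v ∈ T.piece f T.root := by
      refine ⟨v, hD v, ?_⟩
      unfold RT.cell
      split_ifs with h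
      · rw [h]; rfl
      · exact Or.inl rfl
    obtain ⟨a1, a2, a3, a4⟩ := hfp _ hx
    rw [e] at a1 a2 a3 a4
    simp only at a1 a2 a3 a4
    refine ⟨i, j, ?_, ?_, ?_, ?_, e⟩
    · exact_mod_cast a1
    · rw [add_comm] at a2; exact_mod_cast a2
    · have : (1 : ℝ) ≤ j := by linarith
      exact_mod_cast this
    · exact_mod_cast a4
  · rintro u v ⟨h, hdist⟩
    obtain ⟨hv, rfl⟩ := (hT u v h).2 hdist
    exact hf.mono v (hD v) hv
  · -- `W + 1 ≤ 4 * b * s ^ 2` and `s * (H + 1) ≤ 48 * b * n`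
    have h1 : W + 1 ≤ 4 * b * s ^ 2 := by
      have : s ^ 2 ≤ b * s ^ 2 := Nat.le_mul_of_pos_left _ hb
      nlinarith
    have h2 : s * (H + 1) ≤ 48 * b * n :=
      le_trans (Nat.mul_le_mul_left _ (by omega)) hH
    have h3 : (W + 1) * (H + 1) ≤ 192 * b ^ 2 * s * n := by
      calc (W + 1) * (H + 1) ≤ 4 * b * s ^ 2 * (H + 1) := Nat.mul_le_mul_right _ h1
        _ = 4 * b * s * (s * (H + 1)) := by ring
        _ ≤ 4 * b * s * (48 * b * n) := Nat.mul_le_mul_left _ h2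
        _ = 192 * b ^ 2 * s * n := by ring
    have h4 : ((W + 1 : ℕ) : ℝ) * ((H + 1 : ℕ) : ℝ) ≤ 192 * (b : ℝ) ^ 2 * s * n := by
      exact_mod_cast h3
    have h5 : (b : ℝ) ^ 2 ≤ (3 * Real.logb 2 (Real.logb 2 n)) ^ 2 :=
      pow_le_pow_left₀ (by positivity) hb2 2
    have h6 : (b : ℝ) ^ 2 * s ≤
        (3 * Real.logb 2 (Real.logb 2 n)) ^ 2 * (2 * Real.sqrt (Real.logb 2 n)) :=
      mul_le_mul h5 hs2 (by positivity) (by positivity)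
    have h7 : (b : ℝ) ^ 2 * s * n ≤ (3 * Real.logb 2 (Real.logb 2 n)) ^ 2 *
        (2 * Real.sqrt (Real.logb 2 n)) * n := mul_le_mul_of_nonneg_right h6 (by positivity)
    linarith
end

section
/- There exists a constant c > 0 such that the following holds: if S ⊆ ℝ² is a convex set, Λ ⊆ ℝ² is a lattice, and n ≥ 1 is an integer such that S ∩ Λ contains at least n points, then there exist positive integers a, b with a·b ≥ c·n, vectors u, v ∈ ℝ², and a point w ∈ ℝ² such that the set G = {w + i·u + j·v : i ∈ {1, …, a}, j ∈ {1, …, b}} has exactly a·b elements and G ⊆ S ∩ Λ. -/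
/-!
After pulling back along the parametrisation `(i, j) ↦ i • u₀ + j • v₀`, it suffices to find a large
affine grid inside a "convex" set `P` of integer points containing a finite set `F`
(`exists_grid`). If the parametrisation is not injective, the lattice is cyclic (`cyclic_case`),
and `P` is taken inside the axis `ℤ × {0}`.

Choose `m` maximal such that some `p` and `p + m u`, with `u ≠ 0`, both lie in `P`. Maximality has
three consequences.
* `u` is primitive, so it extends to a basis `u, v` of `ℤ²`.
* No two points of `F` are congruent modulo `m + 1`, so `|F| ≤ (m + 1)²`.
* No two points of `F` on the same line parallel to `u` have `u`-coordinates congruent modulo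
  `m + 1`. So if `h` is the largest distance (in `v`-coordinate) of a point `C` of `F` from the line
  `p + ℝ u`, then `|F| ≤ (m + 1) (2 h + 1)`.

After a shear the point `C` is `p + r u + h v` with `0 ≤ r < h` (when `h > 0`), and the triangle
with vertices `p`, `p + m u`, `C` contains `p + i u + j v` for all `0 ≤ j ≤ J ≤ i ≤ m / 2`, where
`J = min (h / 2) (m / 4)`. The two bounds on `|F|` show that this grid has at least `|F| / 16`
points.
-/

/-- A (two-dimensional) lattice: the set of integer combinations of two vectors. -/
def IsLattice (Λ : Set (ℝ × ℝ)) : Prop :=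
  ∃ u₀ v₀ : ℝ × ℝ, Λ = {p | ∃ i j : ℤ, p = i • u₀ + j • v₀}

/-! ### Convex sets of integer points -/

/-- Convexity for sets of integer points, without division: an integer point that is a
convex combination of at most three points of `P`, with rational weights `α / (α + β + γ)` etc.,
belongs to `P`. -/
def ZConvex (P : Set (ℤ × ℤ)) : Prop :=
  ∀ A ∈ P, ∀ B ∈ P, ∀ C ∈ P, ∀ α β γ : ℤ, 0 ≤ α → 0 ≤ β → 0 ≤ γ → 0 < α + β + γ →
    ∀ z : ℤ × ℤ, α • A + β • B + γ • C = (α + β + γ) • z → z ∈ P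

lemma ZConvex.inter {P Q : Set (ℤ × ℤ)} (hP : ZConvex P) (hQ : ZConvex Q) : ZConvex (P ∩ Q) :=
  fun A hA B hB C hC α β γ h1 h2 h3 h4 z hz =>
    ⟨hP A hA.1 B hB.1 C hC.1 α β γ h1 h2 h3 h4 z hz, hQ A hA.2 B hB.2 C hC.2 α β γ h1 h2 h3 h4 z hz⟩

lemma zconvex_preimage {E : Type*} [AddCommGroup E] [Module ℝ E] (φ : ℤ × ℤ →+ E) {S : Set E}
    (hS : Convex ℝ S) : ZConvex (φ ⁻¹' S) := by
  intro A hA B hB C hC α β γ h1 h2 h3 h4 z hz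
  have e : α • φ A + β • φ B + γ • φ C = (α + β + γ) • φ z := by
    rw [← map_zsmul, ← map_zsmul, ← map_zsmul, ← map_zsmul, ← map_add, ← map_add, hz]
  simp only [← Int.cast_smul_eq_zsmul ℝ] at e
  have h4' : (0 : ℝ) < ((α + β + γ : ℤ) : ℝ) := by exact_mod_cast h4
  set t : ℝ := ((α + β + γ : ℤ) : ℝ) with ht
  have h1' : (0 : ℝ) ≤ α := by exact_mod_cast h1
  have h2' : (0 : ℝ) ≤ β := by exact_mod_cast h2
  have h3' : (0 : ℝ) ≤ γ := by exact_mod_cast h3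
  have e2 : φ z = (α / t) • φ A + (β / t) • φ B + (γ / t) • φ C := by
    have : φ z = t⁻¹ • (t • φ z) := by rw [smul_smul, inv_mul_cancel₀ h4'.ne', one_smul]
    rw [this, ← e, smul_add, smul_add, smul_smul, smul_smul, smul_smul]
    simp only [div_eq_inv_mul]
  change φ z ∈ S
  rw [e2]
  have := hS.sum_mem (t := Finset.univ) (w := ![α / t, β / t, γ / t]) (z := ![φ A, φ B, φ C])
    (by intro i _; fin_cases i <;> simp <;> positivity)
    (by
      simp only [Fin.sum_univ_three, Matrix.cons_val]
      rw [← add_div, ← add_div, div_eq_one_iff_eq h4'.ne', ht]; push_cast; rfl)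
    (by intro i _; fin_cases i <;> simp <;> assumption)
  simpa [Fin.sum_univ_three] using this

lemma zconvex_box (B : ℤ) : ZConvex {z | |z.1| ≤ B ∧ |z.2| ≤ B} := by
  intro A hA B' hB C hC α β γ h1 h2 h3 h4 z hz
  simp only [Set.mem_ofPred_eq, abs_le] at *
  have e1 := congrArg Prod.fst hz
  have e2 := congrArg Prod.snd hz
  simp at e1 e2
  have key : ∀ a b c x : ℤ, -B ≤ a ∧ a ≤ B → -B ≤ b ∧ b ≤ B → -B ≤ c ∧ c ≤ B →
      α * a + β * b + γ * c = (α + β + γ) * x → -B ≤ x ∧ x ≤ B := by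
    rintro a b c x ⟨a1, a2⟩ ⟨b1, b2⟩ ⟨c1, c2⟩ e
    constructor
    · refine le_of_mul_le_mul_left ?_ h4
      nlinarith [mul_le_mul_of_nonneg_left a1 h1, mul_le_mul_of_nonneg_left b1 h2,
        mul_le_mul_of_nonneg_left c1 h3]
    · refine le_of_mul_le_mul_left ?_ h4
      nlinarith [mul_le_mul_of_nonneg_left a2 h1, mul_le_mul_of_nonneg_left b2 h2,
        mul_le_mul_of_nonneg_left c2 h3]
  exact ⟨key _ _ _ _ hA.1 hB.1 hC.1 e1, key _ _ _ _ hA.2 hB.2 hC.2 e2⟩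

/-! ### Grids in convex sets of integer points -/

/-- The triangle with vertices `p`, `p + m u`, `p + x u + h v` contains, after shearing `v`, the
points `p + i u + j v` with `0 ≤ j ≤ J ≤ i ≤ m / 2`, provided `J ≤ h / 2`. -/
lemma triangle_grid {P : Set (ℤ × ℤ)} (hP : ZConvex P) {p u v : ℤ × ℤ} {m h x : ℤ} (hm : 0 < m)
    (hh : 0 ≤ h) (h1 : p ∈ P) (h2 : p + m • u ∈ P) (h3 : p + x • u + h • v ∈ P)
    {J : ℤ} (hJ : 2 * J ≤ h) :
    ∃ s : ℤ, ∀ i j : ℤ, 0 ≤ j → j ≤ J → J ≤ i → 2 * i ≤ m → p + i • u + j • (v + s • u) ∈ P := by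
  refine ⟨x / h, fun i j hj0 hj hi him => ?_⟩
  rcases hh.eq_or_lt with rfl | hpos
  · obtain rfl : j = 0 := by omega
    refine hP _ h1 _ h2 _ h1 (m - i) i 0 (by omega) (by omega) le_rfl (by omega) _ ?_
    module
  · have hr := Int.emod_add_mul_ediv x h
    have hr0 := Int.emod_nonneg x hpos.ne'
    have hr1 := Int.emod_lt_of_pos x hpos
    set r := x % h
    set s := x / h
    -- barycentric coordinates of the target, scaled by `m * h`
    refine hP _ h1 _ h2 _ h3 (m * h - j * m - i * h + j * r) (i * h - j * r) (j * m)
      ?_ ?_ (by positivity) ?_ _ ?_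
    · nlinarith [mul_nonneg hj0 hr0]
    · nlinarith [mul_nonneg hj0 (sub_nonneg.2 hr1.le), mul_nonneg (sub_nonneg.2 (hj.trans hi)) hh]
    · have : 0 < m * h := by positivity
      linarith
    · rw [← hr]
      module

/-- A bounded convex set of integer points containing the finite set `F` contains an
`a × b` affine grid (with independent directions) with `16 a b ≥ |F|`. -/
lemma exists_grid_of_bounded {P : Set (ℤ × ℤ)} (hP : ZConvex P) {B : ℤ}
    (hB : ∀ z ∈ P, |z.1| ≤ B ∧ |z.2| ≤ B) (F : Finset (ℤ × ℤ)) (hF : F.Nonempty)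
    (hFP : ∀ z ∈ F, z ∈ P) :
    ∃ a b : ℕ, 0 < a ∧ 0 < b ∧ F.card ≤ 16 * (a * b) ∧ ∃ u v w : ℤ × ℤ,
      u.1 * v.2 - u.2 * v.1 ≠ 0 ∧
      ∀ i j : ℤ, 1 ≤ i → i ≤ a → 1 ≤ j → j ≤ b → w + i • u + j • v ∈ P := by
  classical
  by_cases hc : F.card ≤ 1
  · obtain ⟨z, hz⟩ := hF
    refine ⟨1, 1, one_pos, one_pos, by omega, (1, 0), (0, 1), z - (1, 0) - (0, 1), by simp, ?_⟩
    intro i j h1 h2 h3 h4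
    obtain rfl : i = 1 := by push_cast at h2; omega
    obtain rfl : j = 1 := by push_cast at h4; omega
    convert hFP z hz using 1
    module
  push Not at hc
  obtain ⟨z₁, hz₁, z₂, hz₂, hne⟩ := Finset.one_lt_card.1 hc
  let M : Set ℕ := {m | ∃ p u : ℤ × ℤ, u ≠ 0 ∧ p ∈ P ∧ p + (m : ℤ) • u ∈ P}
  have hM1 : 1 ∈ M := ⟨z₁, z₂ - z₁, sub_ne_zero.2 hne.symm, hFP _ hz₁, by simpa using hFP _ hz₂⟩
  have hMb : BddAbove M := by
    refine ⟨(2 * B).toNat, ?_⟩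
    rintro m ⟨p, u, hu, hp, hq⟩
    have key : ∀ x y : ℤ, y ≠ 0 → |x| ≤ B → |x + m * y| ≤ B → m ≤ (2 * B).toNat := by
      intro x y hy h1 h2
      have h3 : |(m : ℤ) * y| ≤ 2 * B := by
        rw [abs_le] at *
        constructor <;> linarith
      rw [abs_mul, Nat.abs_cast] at h3
      have : 1 ≤ |y| := Int.one_le_abs hy
      have : (m : ℤ) ≤ 2 * B := by nlinarith
      omega
    have b1 := hB _ hp
    have b2 := hB _ hq
    simp only [Prod.fst_add, Prod.snd_add, Prod.smul_fst, Prod.smul_snd, smul_eq_mul] at b2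
    by_cases h : u.1 = 0
    · refine key _ u.2 (fun h' => hu (Prod.ext h h')) b1.2 b2.2
    · exact key _ u.1 h b1.1 b2.1
  obtain ⟨p, u, hu, hp, hq⟩ := Nat.sSup_mem ⟨1, hM1⟩ hMb
  have hmax : ∀ k ∈ M, k ≤ sSup M := fun k hk => le_csSup hMb hk
  have hm1 : 1 ≤ sSup M := hmax _ hM1
  set m := sSup M
  -- a version of maximality for congruent points
  have hcong : ∀ z ∈ P, ∀ z' ∈ P, ∀ w : ℤ × ℤ, z' - z = ((m : ℤ) + 1) • w → z = z' := by
    intro z hz z' hz' w hw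
    by_contra hne
    have : m + 1 ∈ M := by
      refine ⟨z, w, ?_, hz, ?_⟩
      · rintro rfl
        rw [smul_zero, sub_eq_zero] at hw
        exact hne hw.symm
      · push_cast
        rw [← hw]
        simpa using hz'
    have := hmax _ this
    omega
  -- primitivity of `u`
  obtain ⟨v, hv⟩ : ∃ v : ℤ × ℤ, u.1 * v.2 - u.2 * v.1 = 1 := by
    obtain ⟨c, hc1⟩ : (Int.gcd u.1 u.2 : ℤ) ∣ u.1 := Int.gcd_dvd_left ..
    obtain ⟨d, hd1⟩ : (Int.gcd u.1 u.2 : ℤ) ∣ u.2 := Int.gcd_dvd_right ..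
    have hg : m * Int.gcd u.1 u.2 ∈ M := by
      refine ⟨p, (c, d), ?_, hp, ?_⟩
      · intro h0
        simp only [Prod.mk_eq_zero] at h0
        rw [h0.1, mul_zero] at hc1
        rw [h0.2, mul_zero] at hd1
        exact hu (Prod.ext hc1 hd1)
      · convert hq using 2
        ext
        · simp only [Prod.smul_mk, Prod.smul_fst, smul_eq_mul]
          push_cast
          rw [mul_assoc, ← hc1]
        · simp only [Prod.smul_mk, Prod.smul_snd, smul_eq_mul]
          push_cast
          rw [mul_assoc, ← hd1]
    have hle := hmax _ hg
    have hg0 : Int.gcd u.1 u.2 ≠ 0 := by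
      intro h0
      rw [Int.gcd_eq_zero_iff] at h0
      exact hu (Prod.ext h0.1 h0.2)
    have hg1 : Int.gcd u.1 u.2 = 1 := by
      have : Int.gcd u.1 u.2 ≤ 1 := by
        by_contra h
        push Not at h
        nlinarith
      omega
    have hbez := Int.gcd_eq_gcd_ab u.1 u.2
    rw [hg1] at hbez
    refine ⟨(-Int.gcdB u.1 u.2, Int.gcdA u.1 u.2), ?_⟩
    push_cast at hbez
    linarith
  have hdecomp : ∀ z : ℤ × ℤ, z = (z.1 * v.2 - z.2 * v.1) • u + (u.1 * z.2 - u.2 * z.1) • v := by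
    intro z
    ext
    · simp only [Prod.fst_add, Prod.smul_fst, smul_eq_mul]
      linear_combination (-z.1) * hv
    · simp only [Prod.snd_add, Prod.smul_snd, smul_eq_mul]
      linear_combination (-z.2) * hv
  have hmpos : (0 : ℤ) < (m : ℤ) + 1 := by omega
  have hI : (Finset.Ico (0 : ℤ) (m + 1)).card = m + 1 := by simp
  have hcard1 : F.card ≤ (m + 1) * (m + 1) := by
    have := Finset.card_le_card_of_injOn (s := F)
      (t := Finset.Ico (0 : ℤ) (m + 1) ×ˢ Finset.Ico (0 : ℤ) (m + 1))
      (fun z => (z.1 % ((m : ℤ) + 1), z.2 % ((m : ℤ) + 1))) ?_ ?_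
    · rwa [Finset.card_product, hI] at this
    · intro z _
      simp [Int.emod_nonneg _ hmpos.ne', Int.emod_lt_of_pos _ hmpos]
    · intro z hz z' hz' h
      simp only [Prod.mk.injEq] at h
      obtain ⟨c, hc⟩ := Int.ModEq.dvd h.1
      obtain ⟨d, hd⟩ := Int.ModEq.dvd h.2
      exact hcong z (hFP z hz) z' (hFP z' hz') (c, d) (Prod.ext hc hd)
  obtain ⟨C, hC, hCmax⟩ := F.exists_max_image
    (fun z => (u.1 * (z - p).2 - u.2 * (z - p).1).natAbs) hF
  set y := u.1 * (C - p).2 - u.2 * (C - p).1 with hy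
  set h := y.natAbs with hh
  have hcard2 : F.card ≤ (2 * h + 1) * (m + 1) := by
    have := Finset.card_le_card_of_injOn (s := F)
      (t := Finset.Icc (-(h : ℤ)) h ×ˢ Finset.Ico (0 : ℤ) (m + 1))
      (fun z => (u.1 * (z - p).2 - u.2 * (z - p).1, (z.1 * v.2 - z.2 * v.1) % ((m : ℤ) + 1))) ?_ ?_
    · rw [Finset.card_product, hI, Int.card_Icc] at this
      convert this using 2
      omega
    · intro z hz
      have := hCmax z hz
      simp only [Finset.coe_product, Set.mem_prod, Finset.coe_Icc, Finset.coe_Ico, Set.mem_Icc,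
        Set.mem_Ico, Int.emod_nonneg _ hmpos.ne', Int.emod_lt_of_pos _ hmpos, and_true]
      omega
    · intro z hz z' hz' h
      simp only [Prod.mk.injEq, Prod.fst_sub, Prod.snd_sub] at h
      obtain ⟨c, hc⟩ := Int.ModEq.dvd h.2
      refine hcong z (hFP z hz) z' (hFP z' hz') (c • u) ?_
      have e1 : (z' - z).1 * v.2 - (z' - z).2 * v.1 = (m + 1) * c := by
        rw [← hc, Prod.fst_sub, Prod.snd_sub]; ring
      have e2 : u.1 * (z' - z).2 - u.2 * (z' - z).1 = 0 := by
        rw [Prod.fst_sub, Prod.snd_sub]; linarith [h.1]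
      rw [hdecomp (z' - z), e1, e2, zero_smul, add_zero, mul_smul]
  -- reflect `v` so that `C` lies on its positive side
  obtain ⟨v', x, hv', hCx⟩ : ∃ (v' : ℤ × ℤ) (x : ℤ), u.1 * v'.2 - u.2 * v'.1 ≠ 0 ∧
      p + x • u + (h : ℤ) • v' = C := by
    have hd := hdecomp (C - p)
    rw [← hy] at hd
    rcases Int.natAbs_eq y with e | e
    · refine ⟨v, (C - p).1 * v.2 - (C - p).2 * v.1, by rw [hv]; exact one_ne_zero, ?_⟩
      rw [hh, ← e, add_assoc, ← hd]
      abel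
    · refine ⟨-v, (C - p).1 * v.2 - (C - p).2 * v.1, ?_, ?_⟩
      · simp only [Prod.fst_neg, Prod.snd_neg]
        intro h0
        linarith
      · rw [hh, smul_neg, ← neg_smul, ← e, add_assoc, ← hd]
        abel
  set J := min (h / 2) (m / 4) with hJ
  obtain ⟨s, hs⟩ := triangle_grid hP (p := p) (u := u) (v := v') (m := m) (h := h) (x := x)
    (by omega) (by omega) hp hq (hCx ▸ hFP C hC) (J := J) (by omega)
  have ha : m + 1 ≤ 4 * (m / 2 - J + 1) := by omega
  refine ⟨m / 2 - J + 1, J + 1, by omega, by omega, ?_, u, v' + s • u,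
    p + ((J : ℤ) - 1) • u - (v' + s • u), ?_, ?_⟩
  · rcases min_choice (h / 2) (m / 4) with e | e
    · have hb : 2 * h + 1 ≤ 4 * (J + 1) := by omega
      nlinarith [Nat.mul_le_mul ha hb]
    · have hb : m + 1 ≤ 4 * (J + 1) := by omega
      nlinarith [Nat.mul_le_mul ha hb]
  · convert hv' using 1
    simp only [Prod.fst_add, Prod.snd_add, Prod.smul_fst, Prod.smul_snd, smul_eq_mul]
    ring
  · intro i j hi1 hi2 hj1 hj2
    convert hs (J - 1 + i) (j - 1) (by omega) (by omega) (by omega) (by omega) using 1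
    module

lemma exists_grid {P : Set (ℤ × ℤ)} (hP : ZConvex P) (F : Finset (ℤ × ℤ)) (hF : F.Nonempty)
    (hFP : ∀ z ∈ F, z ∈ P) :
    ∃ a b : ℕ, 0 < a ∧ 0 < b ∧ F.card ≤ 16 * (a * b) ∧ ∃ u v w : ℤ × ℤ,
      u.1 * v.2 - u.2 * v.1 ≠ 0 ∧
      ∀ i j : ℤ, 1 ≤ i → i ≤ a → 1 ≤ j → j ≤ b → w + i • u + j • v ∈ P := by
  let B : ℤ := ∑ z ∈ F, (|z.1| + |z.2|)
  have hB : ∀ z ∈ F, |z.1| + |z.2| ≤ B := fun z hz =>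
    Finset.single_le_sum (f := fun z : ℤ × ℤ => |z.1| + |z.2|) (fun _ _ => by positivity) hz
  obtain ⟨a, b, ha, hb, hab, u, v, w, hd, hg⟩ :=
    exists_grid_of_bounded (hP.inter (zconvex_box B)) (fun z hz => hz.2) F hF
      (fun z hz => ⟨hFP z hz, by have := hB z hz; have := abs_nonneg z.2; omega,
        by have := hB z hz; have := abs_nonneg z.1; omega⟩)
  exact ⟨a, b, ha, hb, hab, u, v, w, hd, fun i j h1 h2 h3 h4 => (hg i j h1 h2 h3 h4).1⟩

/-! ### Planar lattices, possibly degenerate -/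

/-- Transfer of an integer grid to `S ∩ Λ` along a homomorphism that is injective on `P`. -/
lemma transfer (S Λ : Set (ℝ × ℝ)) (φ : ℤ × ℤ →+ ℝ × ℝ) {P : Set (ℤ × ℤ)} (hP : ZConvex P)
    (hinj : Set.InjOn φ P) (hPS : ∀ z ∈ P, φ z ∈ S ∩ Λ) (n : ℕ) (hn : 1 ≤ n)
    (F : Finset (ℝ × ℝ)) (hF : (F : Set (ℝ × ℝ)) ⊆ φ '' P) (hnF : n ≤ F.card) :
    ∃ a b : ℕ, 0 < a ∧ 0 < b ∧ (1 / 16 : ℝ) * n ≤ (a : ℝ) * b ∧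
      ∃ u v w : ℝ × ℝ,
        {p : ℝ × ℝ | ∃ i j : ℤ, 1 ≤ i ∧ i ≤ a ∧ 1 ≤ j ∧ j ≤ b ∧
          p = w + i • u + j • v}.ncard = a * b ∧
        {p : ℝ × ℝ | ∃ i j : ℤ, 1 ≤ i ∧ i ≤ a ∧ 1 ≤ j ∧ j ≤ b ∧
          p = w + i • u + j • v} ⊆ S ∩ Λ := by
  classical
  obtain ⟨F', hF', rfl⟩ := Finset.subset_set_image_iff.1 hF
  have hcard : n ≤ F'.card := hnF.trans Finset.card_image_le
  obtain ⟨a, b, ha, hb, hab, u, v, w, hd, hg⟩ :=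
    exists_grid hP F' (Finset.card_pos.1 (by omega)) (fun z hz => hF' hz)
  refine ⟨a, b, ha, hb, ?_, φ u, φ v, φ w, ?_, ?_⟩
  · have : (n : ℝ) ≤ 16 * (a * b) := by exact_mod_cast hcard.trans hab
    linarith
  · have hset : {p : ℝ × ℝ | ∃ i j : ℤ, 1 ≤ i ∧ i ≤ a ∧ 1 ≤ j ∧ j ≤ b ∧
        p = φ w + i • φ u + j • φ v} =
        (fun q : ℤ × ℤ => φ (w + q.1 • u + q.2 • v)) ''
          ((Finset.Icc (1 : ℤ) a ×ˢ Finset.Icc (1 : ℤ) b : Finset (ℤ × ℤ)) : Set (ℤ × ℤ)) := by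
      ext p
      simp only [Set.mem_ofPred_eq, Set.mem_image, Finset.coe_product, Set.mem_prod, Finset.coe_Icc,
        Set.mem_Icc, Prod.exists, map_add, map_zsmul]
      constructor
      · rintro ⟨i, j, h1, h2, h3, h4, rfl⟩
        exact ⟨i, j, ⟨⟨h1, h2⟩, h3, h4⟩, rfl⟩
      · rintro ⟨i, j, ⟨⟨h1, h2⟩, h3, h4⟩, rfl⟩
        exact ⟨i, j, h1, h2, h3, h4, rfl⟩
    rw [hset, Set.InjOn.ncard_image, Set.ncard_coe_finset]
    · simp
    · intro q hq q' hq' h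
      simp only [Finset.coe_product, Set.mem_prod, Finset.coe_Icc, Set.mem_Icc] at hq hq'
      have e := hinj (hg _ _ hq.1.1 hq.1.2 hq.2.1 hq.2.2)
        (hg _ _ hq'.1.1 hq'.1.2 hq'.2.1 hq'.2.2) h
      have e1 := congrArg Prod.fst e
      have e2 := congrArg Prod.snd e
      simp only [Prod.fst_add, Prod.snd_add, Prod.smul_fst, Prod.smul_snd, smul_eq_mul] at e1 e2
      ext
      · refine mul_left_cancel₀ hd ?_
        linear_combination v.2 * e1 - v.1 * e2
      · refine mul_left_cancel₀ hd ?_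
        linear_combination u.1 * e2 - u.2 * e1
  · rintro _ ⟨i, j, h1, h2, h3, h4, rfl⟩
    simpa only [map_add, map_zsmul] using hPS _ (hg i j h1 h2 h3 h4)

/-- If two generators satisfy a nontrivial integer relation, they are multiples of a single
integer combination of them. -/
lemma cyclic_case {u₀ v₀ : ℝ × ℝ} {p q : ℤ} (hpq : ¬(p = 0 ∧ q = 0)) (h : p • u₀ + q • v₀ = 0) :
    ∃ g : ℝ × ℝ, (∃ i j : ℤ, g = i • u₀ + j • v₀) ∧ ∃ k l : ℤ, u₀ = k • g ∧ v₀ = l • g := by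
  obtain ⟨c, hc⟩ : (Int.gcd p q : ℤ) ∣ p := Int.gcd_dvd_left ..
  obtain ⟨d, hd⟩ : (Int.gcd p q : ℤ) ∣ q := Int.gcd_dvd_right ..
  have hbez := Int.gcd_eq_gcd_ab p q
  have hg0 : (Int.gcd p q : ℤ) ≠ 0 := by
    rw [Ne, Int.natCast_eq_zero, Int.gcd_eq_zero_iff]; exact hpq
  set t : ℤ := (Int.gcd p q : ℤ)
  set α := Int.gcdA p q
  set β := Int.gcdB p q
  have h1 : c • u₀ + d • v₀ = 0 := by
    have : t • (c • u₀ + d • v₀) = 0 := by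
      rw [smul_add, smul_smul, smul_smul, ← hc, ← hd, h]
    exact (smul_eq_zero.1 this).resolve_left hg0
  have h2 : c * α + d * β = 1 := by
    refine mul_left_cancel₀ hg0 ?_
    rw [mul_add, ← mul_assoc, ← mul_assoc, ← hc, ← hd, mul_one, ← hbez]
  refine ⟨β • u₀ - α • v₀, ⟨β, -α, by module⟩, d, -c, ?_, ?_⟩
  · have : d • (β • u₀ - α • v₀) = (c * α + d * β) • u₀ - α • (c • u₀ + d • v₀) := by module
    rw [this, h1, h2]; simp
  · have : -c • (β • u₀ - α • v₀) = (c * α + d * β) • v₀ - β • (c • u₀ + d • v₀) := by module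
    rw [this, h1, h2]; simp

/-- The homomorphism `(i, j) ↦ i • u₀ + j • v₀`. -/
def paramHom (u₀ v₀ : ℝ × ℝ) : ℤ × ℤ →+ ℝ × ℝ where
  toFun z := z.1 • u₀ + z.2 • v₀
  map_zero' := by simp
  map_add' x y := by simp only [Prod.fst_add, Prod.snd_add]; module

/-- Observation 1: if a convex set `S` contains at least `n` points of a lattice `Λ`, then
`S ∩ Λ` contains an `a×b` affine grid with `a·b = Ω(n)`. -/
theorem stmt8 : ∃ c : ℝ, 0 < c ∧
    ∀ (S Λ : Set (ℝ × ℝ)), Convex ℝ S → IsLattice Λ →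
    ∀ n : ℕ, 1 ≤ n →
    (∃ F : Finset (ℝ × ℝ), (F : Set (ℝ × ℝ)) ⊆ S ∩ Λ ∧ n ≤ F.card) →
    ∃ a b : ℕ, 0 < a ∧ 0 < b ∧ c * n ≤ (a : ℝ) * b ∧
      ∃ u v w : ℝ × ℝ,
        {p : ℝ × ℝ | ∃ i j : ℤ, 1 ≤ i ∧ i ≤ a ∧ 1 ≤ j ∧ j ≤ b ∧
          p = w + i • u + j • v}.ncard = a * b ∧
        {p : ℝ × ℝ | ∃ i j : ℤ, 1 ≤ i ∧ i ≤ a ∧ 1 ≤ j ∧ j ≤ b ∧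
          p = w + i • u + j • v} ⊆ S ∩ Λ := by
  refine ⟨1 / 16, by norm_num, ?_⟩
  rintro S Λ hS ⟨u₀, v₀, hΛ⟩ n hn ⟨F, hF, hnF⟩
  by_cases hinj : ∀ z : ℤ × ℤ, z.1 • u₀ + z.2 • v₀ = 0 → z = 0
  · refine transfer S Λ (paramHom u₀ v₀) (zconvex_preimage (paramHom u₀ v₀) hS)
      ((injective_iff_map_eq_zero (paramHom u₀ v₀)).2 hinj).injOn ?_ n hn F ?_ hnF
    · intro z hz
      exact ⟨hz, hΛ ▸ ⟨z.1, z.2, rfl⟩⟩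
    · intro p hp
      obtain ⟨h1, h2⟩ := hF hp
      rw [hΛ] at h2
      obtain ⟨i, j, rfl⟩ := h2
      exact ⟨(i, j), h1, rfl⟩
  · push Not at hinj
    obtain ⟨z, hz, hz0⟩ := hinj
    obtain ⟨g, ⟨i₀, j₀, hg⟩, k, l, hk, hl⟩ :=
      cyclic_case (fun h => hz0 (Prod.ext h.1 h.2)) hz
    have hΛ' : ∀ p, p ∈ Λ ↔ ∃ i : ℤ, p = i • g := by
      intro p
      rw [hΛ]
      constructor
      · rintro ⟨i, j, rfl⟩
        refine ⟨i * k + j * l, ?_⟩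
        rw [add_smul, mul_smul, mul_smul, ← hk, ← hl]
      · rintro ⟨i, rfl⟩
        refine ⟨i * i₀, i * j₀, ?_⟩
        rw [hg]; module
    -- when `g = 0` the parameter set shrinks to a point, to keep injectivity
    let T : Set (ℝ × ℝ) := if g = 0 then {0} else {q | q.2 = 0}
    have hT : Convex ℝ T := by
      dsimp only [T]
      split_ifs
      · exact convex_singleton _
      · intro x hx y hy a b _ _ _
        simp only [Set.mem_ofPred_eq] at hx hy ⊢
        simp [hx, hy]
    have hT0 : ∀ q ∈ T, q.2 = 0 := by
      dsimp only [T]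
      split_ifs
      · rintro q rfl; rfl
      · exact fun q hq => hq
    refine transfer S Λ (paramHom g 0)
      ((zconvex_preimage (paramHom g 0) hS).inter (zconvex_preimage (paramHom (1, 0) (0, 1)) hT))
      ?_ ?_ n hn F ?_ hnF
    · rintro x ⟨-, hx⟩ y ⟨-, hy⟩ h
      have hx2 := hT0 _ hx
      have hy2 := hT0 _ hy
      simp only [paramHom, Set.mem_preimage, AddMonoidHom.coe_mk, ZeroHom.coe_mk, smul_zero,
        add_zero] at hx hy h hx2 hy2
      simp at hx2 hy2
      by_cases hg0 : g = 0
      · simp [T, hg0] at hx hy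
        ext <;> simp [hx, hy]
      · ext
        · have : (x.1 - y.1) • g = 0 := by rw [sub_smul, h, sub_self]
          exact sub_eq_zero.1 ((smul_eq_zero.1 this).resolve_right hg0)
        · rw [hx2, hy2]
    · rintro z ⟨hz, -⟩
      exact ⟨hz, (hΛ' _).2 ⟨z.1, by simp [paramHom]⟩⟩
    · intro p hp
      obtain ⟨h1, h2⟩ := hF hp
      obtain ⟨i, rfl⟩ := (hΛ' p).1 h2
      by_cases hg0 : g = 0
      · refine ⟨0, ⟨?_, ?_⟩, ?_⟩
        · simpa [hg0] using h1
        · simp [T, hg0]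
        · simp [hg0]
      · refine ⟨(i, 0), ⟨?_, ?_⟩, ?_⟩
        · simpa [paramHom] using h1
        · simp [T, hg0, paramHom]
        · simp [paramHom]
end
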